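/- arXiv:1011.1453 — 12 statements merged into one kernel-verified Lean document; each statement's English description precedes it below -/
import Mathlib

section
/- Let λ1, λ2, λ3, λ4, λ5 > 0, k > 0, M > 0, λ4 > λ5, and fix N0 ≥ 0 such that (λ1/λ2)(M − N0) > r1, where r1 = λ5·k/(λ4 − λ5). Then there exists η > 0 such that for every N ∈ [0, N0] the system x1′ = λ1·(M + N·sin(π t/6 + 1))·x1 − λ2·x1² − λ3·x2·x1/(k + x1), x2′ = λ4·x2·x1/(k + x1) − λ5·x2 admits a 12-periodic differentiable solution x_N = (x_{N,1}, x_{N,2}) : ℝ → ℝ² whose initial value satisfies η ≤ x_{N,1}(0) ≤ p_{N,1} + η and η ≤ x_{N,2}(0) ≤ max{1, r_{N,2}}·exp(12·λ4·p_{N,1}/(k + p_{N,1}) + 12·λ5) + η, where p_{N,1} = (λ1/λ2)(M + N) and r_{N,2} = (k + r1)(λ1(M + N) − λ2·r1)/λ3. -/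
/-!
A positive solution is sought in the logarithmic variables `u = log x₁`, `v = log x₂`, where the
system has exponential right-hand sides and both unknowns range over the whole line.  Write `a t`
for the forced growth rate `λ₁ (M + N sin (π t / 6 + 1))`, which lies between `λ₁ (M - N₀)` and
`λ₁ (M + N)`, and `ρ = λ₅ k / (λ₄ - λ₅)` for the prey level at which the predator balances.

*Existence* (`exists_periodic_log`).  The displacement `(u(12) - u(0), v(12) - v(0))` is a
continuous function of the initial point (`exists_log_flow`).  On a large rectangle it satisfies:
* on the left side (very little prey), the prey stays below `ρ` for a whole period and `v` falls;
* on the right side (prey at its logistic ceiling), `u` falls;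
* on the top side (very many predators), `u` falls;
* on the bottom side (very few predators), `u` or `v` rises: if `u` does not rise, then at its
  minimum the prey equation forces `x₁ > ρ`, hence `x₁ > ρ` throughout, and `v` rises.

Thus the displacement winds once around the origin along the boundary and has a zero
(`planar_zero`); the combinatorial core is a parity count of Sperner type on a grid
(`sperner_grid`).  A zero of the displacement is a solution that closes up, and it extends
periodically (`exists_periodic_extension`).

*Bounds* (`apriori_bounds`).  Every positive periodic solution satisfies explicit upper bounds in
terms of the maximal growth rate, and explicit positive lower bounds.  The lower bounds computed
with `N₀` in place of `N` hold for every `N ∈ [0, N₀]`, and their minimum serves as `η`.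
-/

open Real

/-! ### Zeros of planar maps -/

/-- The indicator, modulo 2, of the grid edges whose two ends carry the labels `0` and `1`. -/
def edgeParity (x y : Fin 3) : ZMod 2 :=
  if (x = 0 ∧ y = 1) ∨ (x = 1 ∧ y = 0) then 1 else 0

/-- Around a square cell that misses some label, the number of `01` edges is even.  The signs,
irrelevant modulo 2, make the sum over all cells telescope. -/
lemma edgeParity_cell : ∀ x y z w : Fin 3,
    ((0 = x ∨ 0 = y ∨ 0 = z ∨ 0 = w) → (1 = x ∨ 1 = y ∨ 1 = z ∨ 1 = w) →
      (2 = x ∨ 2 = y ∨ 2 = z ∨ 2 = w) → False) →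
    (edgeParity y z - edgeParity x w) + (edgeParity w z - edgeParity x y) = 0 := by
  decide

/-- On labels in `{0, 1}` the edge indicator is a coboundary. -/
lemma edgeParity_path : ∀ x y : Fin 3, x ≠ 2 → y ≠ 2 →
    edgeParity x y = (if y = 1 then 1 else 0) - (if x = 1 then 1 else 0) := by
  decide

/-- The parity count behind Sperner's lemma, on a square grid: if the right and top sides are
labelled `0`, the left side avoids `2` and starts with `1`, and no bottom edge is of type `01`,
then some cell carries all three labels. -/
lemma sperner_grid (n : ℕ) (L : ℕ → ℕ → Fin 3)
    (hright : ∀ j ≤ n, L n j = 0) (htop : ∀ i ≤ n, L i n = 0)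
    (hleft : ∀ j ≤ n, L 0 j ≠ 2) (hcorner : L 0 0 = 1)
    (hbot : ∀ i < n, edgeParity (L i 0) (L (i + 1) 0) = 0)
    (hcell : ∀ i < n, ∀ j < n,
      (0 = L i j ∨ 0 = L (i + 1) j ∨ 0 = L (i + 1) (j + 1) ∨ 0 = L i (j + 1)) →
      (1 = L i j ∨ 1 = L (i + 1) j ∨ 1 = L (i + 1) (j + 1) ∨ 1 = L i (j + 1)) →
      (2 = L i j ∨ 2 = L (i + 1) j ∨ 2 = L (i + 1) (j + 1) ∨ 2 = L i (j + 1)) → False) :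
    False := by
  have key : ∑ j ∈ Finset.range n, ∑ i ∈ Finset.range n,
      ((edgeParity (L (i + 1) j) (L (i + 1) (j + 1)) - edgeParity (L i j) (L i (j + 1)))
       + (edgeParity (L i (j + 1)) (L (i + 1) (j + 1)) - edgeParity (L i j) (L (i + 1) j))) = 0 := by
    refine Finset.sum_eq_zero fun j hj => Finset.sum_eq_zero fun i hi => ?_
    rw [Finset.mem_range] at hi hj
    exact edgeParity_cell _ _ _ _ (hcell i hi j hj)
  simp only [Finset.sum_add_distrib] at key
  rw [Finset.sum_comm (f := fun j i =>
    edgeParity (L i (j + 1)) (L (i + 1) (j + 1)) - edgeParity (L i j) (L (i + 1) j))] at key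
  have e1 : ∀ j, ∑ i ∈ Finset.range n,
      (edgeParity (L (i + 1) j) (L (i + 1) (j + 1)) - edgeParity (L i j) (L i (j + 1)))
      = edgeParity (L n j) (L n (j + 1)) - edgeParity (L 0 j) (L 0 (j + 1)) := fun j =>
    Finset.sum_range_sub (fun i => edgeParity (L i j) (L i (j + 1))) n
  have e2 : ∀ i, ∑ j ∈ Finset.range n,
      (edgeParity (L i (j + 1)) (L (i + 1) (j + 1)) - edgeParity (L i j) (L (i + 1) j))
      = edgeParity (L i n) (L (i + 1) n) - edgeParity (L i 0) (L (i + 1) 0) := fun i =>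
    Finset.sum_range_sub (fun j => edgeParity (L i j) (L (i + 1) j)) n
  simp only [e1, e2] at key
  have e3 : ∑ i ∈ Finset.range n,
      (edgeParity (L i n) (L (i + 1) n) - edgeParity (L i 0) (L (i + 1) 0)) = 0 := by
    refine Finset.sum_eq_zero fun i hi => ?_
    rw [Finset.mem_range] at hi
    rw [hbot i hi, htop i hi.le, htop (i + 1) hi]
    decide
  have e4 : ∑ j ∈ Finset.range n,
      (edgeParity (L n j) (L n (j + 1)) - edgeParity (L 0 j) (L 0 (j + 1)))
      = ∑ j ∈ Finset.range n,
        ((fun j => if L 0 j = 1 then (1 : ZMod 2) else 0) j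
          - (fun j => if L 0 j = 1 then (1 : ZMod 2) else 0) (j + 1)) := by
    refine Finset.sum_congr rfl fun j hj => ?_
    rw [Finset.mem_range] at hj
    rw [hright j hj.le, hright (j + 1) hj,
      edgeParity_path _ _ (hleft j hj.le) (hleft (j + 1) hj)]
    simp [edgeParity]
  rw [e3, e4, Finset.sum_range_sub', htop 0 (Nat.zero_le n), hcorner] at key
  revert key
  decide

/-- A planar zero-existence theorem of Poincaré–Miranda type.  The boundary conditions force
`(F, G)` to wind once around the origin along the boundary of the rectangle;
without a zero, labelling a fine grid by the signs of `F` and `G` contradicts `sperner_grid`. -/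
lemma planar_zero (F G : ℝ × ℝ → ℝ) {a b c d : ℝ} (hab : a ≤ b) (hcd : c ≤ d)
    (hF : ContinuousOn F (Set.Icc a b ×ˢ Set.Icc c d))
    (hG : ContinuousOn G (Set.Icc a b ×ˢ Set.Icc c d))
    (hleft : ∀ y ∈ Set.Icc c d, G (a, y) < 0)
    (hright : ∀ y ∈ Set.Icc c d, F (b, y) < 0)
    (htop : ∀ x ∈ Set.Icc a b, F (x, d) < 0)
    (hbot : ∀ x ∈ Set.Icc a b, 0 < F (x, c) ∨ 0 < G (x, c)) :
    ∃ z ∈ Set.Icc a b ×ˢ Set.Icc c d, F z = 0 ∧ G z = 0 := by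
  by_contra! hno
  set K := Set.Icc a b ×ˢ Set.Icc c d with hK
  have hKc : IsCompact K := isCompact_Icc.prod isCompact_Icc
  have hac : (a, c) ∈ K := ⟨⟨le_rfl, hab⟩, ⟨le_rfl, hcd⟩⟩
  obtain ⟨m, hm, hmK⟩ : ∃ m > 0, ∀ z ∈ K, m ≤ max |F z| |G z| := by
    obtain ⟨z, hz, hmin⟩ := hKc.exists_isMinOn ⟨_, hac⟩
      (show ContinuousOn (fun z => max |F z| |G z|) K from hF.abs.sup hG.abs)
    refine ⟨_, ?_, fun w hw => hmin hw⟩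
    rcases eq_or_ne (F z) 0 with h | h
    · exact lt_max_of_lt_right (abs_pos.2 (hno z hz h))
    · exact lt_max_of_lt_left (abs_pos.2 h)
  have hsub : Set.Icc a b ×ˢ ({c} : Set ℝ) ⊆ K :=
    Set.prod_mono le_rfl (by simpa using hcd)
  obtain ⟨m', hm', hmb⟩ : ∃ m > 0, ∀ z ∈ Set.Icc a b ×ˢ ({c} : Set ℝ), m ≤ max (F z) (G z) := by
    obtain ⟨z, hz, hmin⟩ := (isCompact_Icc.prod isCompact_singleton).exists_isMinOn
      ⟨(a, c), ⟨⟨le_rfl, hab⟩, rfl⟩⟩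
      (show ContinuousOn (fun z => max (F z) (G z)) _ from
        (hF.mono hsub).sup (hG.mono hsub))
    refine ⟨_, ?_, fun w hw => hmin hw⟩
    obtain ⟨x, y⟩ := z
    obtain ⟨hx, rfl⟩ : x ∈ Set.Icc a b ∧ y = c := hz
    exact lt_max_iff.2 (hbot x hx)
  obtain ⟨δ₁, hδ₁, huF⟩ := Metric.uniformContinuousOn_iff.1
    (hKc.uniformContinuousOn_of_continuous hF) (min m m') (lt_min hm hm')
  obtain ⟨δ₂, hδ₂, huG⟩ := Metric.uniformContinuousOn_iff.1
    (hKc.uniformContinuousOn_of_continuous hG) (min m m') (lt_min hm hm')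
  obtain ⟨n, hn⟩ := exists_nat_gt (max ((b - a) / min δ₁ δ₂) ((d - c) / min δ₁ δ₂))
  have hδ : 0 < min δ₁ δ₂ := lt_min hδ₁ hδ₂
  have hn0 : (0 : ℝ) < n := lt_of_le_of_lt
    (le_max_of_le_left (div_nonneg (sub_nonneg.2 hab) hδ.le)) hn
  have hsx : (b - a) / n < min δ₁ δ₂ := by
    rw [div_lt_iff₀ hn0, mul_comm, ← div_lt_iff₀ hδ]
    exact lt_of_le_of_lt (le_max_left _ _) hn
  have hsy : (d - c) / n < min δ₁ δ₂ := by
    rw [div_lt_iff₀ hn0, mul_comm, ← div_lt_iff₀ hδ]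
    exact lt_of_le_of_lt (le_max_right _ _) hn
  have hsx0 : 0 ≤ (b - a) / n := div_nonneg (sub_nonneg.2 hab) hn0.le
  have hsy0 : 0 ≤ (d - c) / n := div_nonneg (sub_nonneg.2 hcd) hn0.le
  set px : ℕ → ℝ := fun i => a + i * ((b - a) / n) with hpx
  set py : ℕ → ℝ := fun j => c + j * ((d - c) / n) with hpy
  have px0 : px 0 = a := by simp [hpx]
  have py0 : py 0 = c := by simp [hpy]
  have pxn : px n = b := by simp only [hpx]; field_simp; ring
  have pyn : py n = d := by simp only [hpy]; field_simp; ring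
  have pxm : ∀ i ≤ n, px i ∈ Set.Icc a b := fun i hi => by
    have : (i : ℝ) ≤ n := by exact_mod_cast hi
    refine ⟨le_add_of_nonneg_right (by positivity), ?_⟩
    rw [← pxn]; simp only [hpx]; gcongr
  have pym : ∀ j ≤ n, py j ∈ Set.Icc c d := fun j hj => by
    have : (j : ℝ) ≤ n := by exact_mod_cast hj
    refine ⟨le_add_of_nonneg_right (by positivity), ?_⟩
    rw [← pyn]; simp only [hpy]; gcongr
  -- the three labels stand for `F < 0`, for `G < 0 ≤ F`, and for `0 ≤ F, G`
  set lab : ℝ × ℝ → Fin 3 := fun z => if F z < 0 then 0 else if G z < 0 then 1 else 2 with hlab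
  have lab0 : ∀ z, 0 = lab z → F z < 0 := fun z h => by
    by_contra h0
    by_cases h1 : G z < 0 <;> simp [hlab, h0, h1] at h
  have lab1 : ∀ z, 1 = lab z → 0 ≤ F z ∧ G z < 0 := fun z h => by
    by_cases h0 : F z < 0
    · simp [hlab, h0] at h
    · by_cases h1 : G z < 0
      · exact ⟨not_lt.1 h0, h1⟩
      · simp [hlab, h0, h1] at h
  have lab2 : ∀ z, 2 = lab z → 0 ≤ F z ∧ 0 ≤ G z := fun z h => by
    by_cases h0 : F z < 0
    · simp [hlab, h0] at h
    · by_cases h1 : G z < 0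
      · simp [hlab, h0, h1] at h
      · exact ⟨not_lt.1 h0, not_lt.1 h1⟩
  have near : ∀ i j i' j' : ℕ, (i' = i ∨ i' = i + 1 ∨ i = i' + 1) →
      (j' = j ∨ j' = j + 1 ∨ j = j' + 1) →
      dist (px i, py j) (px i', py j') < min δ₁ δ₂ := by
    intro i j i' j' hi hj
    rw [Prod.dist_eq]
    refine max_lt ?_ ?_
    · rw [Real.dist_eq]
      rcases hi with rfl | rfl | rfl
      · simpa using hδ
      · rw [show px i - px (i + 1) = -((b - a) / n) by simp only [hpx]; push_cast; ring,
          abs_neg, abs_of_nonneg hsx0]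
        exact hsx
      · rw [show px (i' + 1) - px i' = (b - a) / n by simp only [hpx]; push_cast; ring,
          abs_of_nonneg hsx0]
        exact hsx
    · rw [Real.dist_eq]
      rcases hj with rfl | rfl | rfl
      · simpa using hδ
      · rw [show py j - py (j + 1) = -((d - c) / n) by simp only [hpy]; push_cast; ring,
          abs_neg, abs_of_nonneg hsy0]
        exact hsy
      · rw [show py (j' + 1) - py j' = (d - c) / n by simp only [hpy]; push_cast; ring,
          abs_of_nonneg hsy0]
        exact hsy
  -- three points with distinct labels cannot be close: the one labelled `1` would be a near-zero
  have tri : ∀ p ∈ K, ∀ q ∈ K, ∀ r ∈ K, dist p q < min δ₁ δ₂ → dist q r < min δ₁ δ₂ →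
      0 = lab p → 1 = lab q → 2 = lab r → False := by
    intro p hp q hq r hr hpq hqr h0 h1 h2
    have a1 := huF p hp q hq (hpq.trans_le (min_le_left _ _))
    have a2 := huG q hq r hr (hqr.trans_le (min_le_right _ _))
    rw [Real.dist_eq] at a1 a2
    have a1' := abs_lt.1 (a1.trans_le (min_le_left _ _))
    have a2' := abs_lt.1 (a2.trans_le (min_le_left _ _))
    have b0 := lab0 p h0
    have b1 := lab1 q h1
    have b2 := lab2 r h2
    have := hmK q hq
    rcases le_max_iff.1 this with h | h
    · rw [abs_of_nonneg b1.1] at h; linarith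
    · rw [abs_of_neg b1.2] at h; linarith
  -- on the bottom side, uniform positivity of `max F G` excludes edges of type `01`
  have edge : ∀ i ≤ n, ∀ i' ≤ n, (i' = i ∨ i' = i + 1 ∨ i = i' + 1) →
      0 = lab (px i, py 0) → 1 = lab (px i', py 0) → False := by
    intro i hi i' hi' hii h0 h1
    have a1 := huF _ (Set.mk_mem_prod (pxm i hi) (pym 0 n.zero_le)) _
      (Set.mk_mem_prod (pxm i' hi') (pym 0 n.zero_le))
      ((near i 0 i' 0 hii (Or.inl rfl)).trans_le (min_le_left _ _))
    rw [Real.dist_eq] at a1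
    have a1' := abs_lt.1 (a1.trans_le (min_le_right _ _))
    have b0 := lab0 _ h0
    have b1 := lab1 _ h1
    have := hmb (px i', py 0) ⟨pxm i' hi', by simp [py0]⟩
    rcases le_max_iff.1 this with h | h <;> linarith
  refine sperner_grid n (fun i j => lab (px i, py j)) ?_ ?_ ?_ ?_ ?_ ?_
  · intro j hj
    have := hright (py j) (pym j hj)
    simp [hlab, pxn, this]
  · intro i hi
    have := htop (px i) (pxm i hi)
    simp [hlab, pyn, this]
  · intro j hj h
    have h1 := hleft (py j) (pym j hj)
    have h2 := (lab2 _ h.symm).2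
    rw [px0] at h2
    linarith
  · have h1 := hleft c ⟨le_rfl, hcd⟩
    have h2 := (hbot a ⟨le_rfl, hab⟩).resolve_right (not_lt.2 h1.le)
    simp [hlab, px0, py0, h1, not_lt.2 h2.le]
  · intro i hi
    have e1 := edge i hi.le (i + 1) hi (by omega)
    have e2 := edge (i + 1) hi i hi.le (by omega)
    unfold edgeParity
    rw [if_neg]
    rintro (⟨h0, h1⟩ | ⟨h1, h0⟩)
    · exact e1 h0.symm h1.symm
    · exact e2 h0.symm h1.symm
  · intro i hi j hj h0 h1 h2
    have pick : ∀ l : Fin 3, (l = lab (px i, py j) ∨ l = lab (px (i + 1), py j) ∨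
        l = lab (px (i + 1), py (j + 1)) ∨ l = lab (px i, py (j + 1))) →
        ∃ i' j', (i' = i ∨ i' = i + 1) ∧ (j' = j ∨ j' = j + 1) ∧ l = lab (px i', py j') := by
      rintro l (h | h | h | h)
      · exact ⟨i, j, by simp, by simp, h⟩
      · exact ⟨i + 1, j, by simp, by simp, h⟩
      · exact ⟨i + 1, j + 1, by simp, by simp, h⟩
      · exact ⟨i, j + 1, by simp, by simp, h⟩
    obtain ⟨i0, j0, hi0, hj0, l0⟩ := pick 0 h0
    obtain ⟨i1, j1, hi1, hj1, l1⟩ := pick 1 h1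
    obtain ⟨i2, j2, hi2, hj2, l2⟩ := pick 2 h2
    exact tri _ (Set.mk_mem_prod (pxm i0 (by omega)) (pym j0 (by omega)))
      _ (Set.mk_mem_prod (pxm i1 (by omega)) (pym j1 (by omega)))
      _ (Set.mk_mem_prod (pxm i2 (by omega)) (pym j2 (by omega)))
      (near _ _ _ _ (by omega) (by omega)) (near _ _ _ _ (by omega) (by omega)) l0 l1 l2

/-! ### Calculus on an interval -/

lemma sub_le_of_hasDerivWithinAt_le {h h' : ℝ → ℝ} {T C : ℝ}
    (hd : ∀ t ∈ Set.Icc 0 T, HasDerivWithinAt h (h' t) (Set.Icc 0 T) t)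
    (hC : ∀ t ∈ Set.Icc 0 T, h' t ≤ C) {s t : ℝ}
    (hs : s ∈ Set.Icc 0 T) (ht : t ∈ Set.Icc 0 T) (hst : s ≤ t) :
    h t - h s ≤ C * (t - s) := by
  have hd' : ∀ x ∈ interior (Set.Icc 0 T), HasDerivAt h (h' x) x := fun x hx =>
    (hd x (interior_subset hx)).hasDerivAt (mem_interior_iff_mem_nhds.1 hx)
  refine (convex_Icc 0 T).image_sub_le_mul_sub_of_deriv_le
    (fun x hx => (hd x hx).continuousWithinAt)
    (fun x hx => (hd' x hx).differentiableAt.differentiableWithinAt)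
    (fun x hx => ?_) s hs t ht hst
  rw [(hd' x hx).deriv]
  exact hC x (interior_subset hx)

lemma lt_of_hasDerivWithinAt_neg {h h' : ℝ → ℝ} {T : ℝ} (hT : 0 < T)
    (hd : ∀ t ∈ Set.Icc 0 T, HasDerivWithinAt h (h' t) (Set.Icc 0 T) t)
    (hC : ∀ t ∈ Set.Icc 0 T, h' t < 0) : h T < h 0 := by
  refine strictAntiOn_of_deriv_neg (convex_Icc 0 T) (fun x hx => (hd x hx).continuousWithinAt)
    (fun x hx => ?_) ⟨le_rfl, hT.le⟩ ⟨hT.le, le_rfl⟩ hT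
  rw [((hd x (interior_subset hx)).hasDerivAt (mem_interior_iff_mem_nhds.1 hx)).deriv]
  exact hC x (interior_subset hx)

/-- If `h` does not increase over `[0, T]`, its minimum is attained at a time that can be
approached from the left, where the derivative is nonpositive. -/
lemma exists_min_deriv_nonpos {h h' : ℝ → ℝ} {T : ℝ} (hT : 0 < T)
    (hd : ∀ t ∈ Set.Icc 0 T, HasDerivWithinAt h (h' t) (Set.Icc 0 T) t) (hle : h T ≤ h 0) :
    ∃ t ∈ Set.Icc 0 T, h' t ≤ 0 ∧ ∀ s ∈ Set.Icc 0 T, h t ≤ h s := by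
  obtain ⟨t, ht, h0, hmin⟩ : ∃ t ∈ Set.Icc 0 T, 0 < t ∧ ∀ s ∈ Set.Icc 0 T, h t ≤ h s := by
    obtain ⟨t, ht, hmin⟩ := isCompact_Icc.exists_isMinOn (Set.nonempty_Icc.2 hT.le)
      (fun x hx => (hd x hx).continuousWithinAt : ContinuousOn h (Set.Icc 0 T))
    rcases ht.1.eq_or_lt with h0 | h0
    · exact ⟨T, ⟨hT.le, le_rfl⟩, hT, fun s hs => hle.trans (h0 ▸ hmin hs)⟩
    · exact ⟨t, ht, h0, fun s hs => hmin hs⟩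
  refine ⟨t, ht, ?_, hmin⟩
  have hl : HasDerivWithinAt h (h' t) (Set.Ioo 0 t) t :=
    (hd t ht).mono fun x hx => ⟨hx.1.le, hx.2.le.trans ht.2⟩
  rw [hasDerivWithinAt_iff_tendsto_slope' (fun hx => lt_irrefl _ hx.2)] at hl
  have : (nhdsWithin t (Set.Ioo 0 t)).NeBot := by
    rw [← mem_closure_iff_nhdsWithin_neBot, closure_Ioo h0.ne]
    exact ⟨h0.le, le_rfl⟩
  refine le_of_tendsto hl ?_
  filter_upwards [self_mem_nhdsWithin] with x hx
  rw [slope_def_field]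
  exact div_nonpos_of_nonneg_of_nonpos
    (sub_nonneg.2 (hmin x ⟨hx.1.le, hx.2.le.trans ht.2⟩)) (sub_nonpos.2 hx.2.le)

lemma exists_max_deriv_nonneg {h h' : ℝ → ℝ} {T : ℝ} (hT : 0 < T)
    (hd : ∀ t ∈ Set.Icc 0 T, HasDerivWithinAt h (h' t) (Set.Icc 0 T) t) (hle : h 0 ≤ h T) :
    ∃ t ∈ Set.Icc 0 T, 0 ≤ h' t ∧ ∀ s ∈ Set.Icc 0 T, h s ≤ h t := by
  obtain ⟨t, ht, h1, h2⟩ := exists_min_deriv_nonpos (h := fun t => -h t) (h' := fun t => -h' t) hT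
    (fun t ht => (hd t ht).neg) (neg_le_neg hle)
  exact ⟨t, ht, by simpa using h1, fun s hs => by simpa using h2 s hs⟩

/-! ### Flows over one period and periodic extension -/

/-- A bounded Lipschitz field plus a bounded time-dependent forcing has a flow on all of `[0, T]`,
continuous in the initial point. -/
lemma exists_flow (T : ℝ) (hT : 0 < T) (g : ℝ × ℝ → ℝ × ℝ) (K : NNReal) (hg : LipschitzWith K g)
    (B : ℝ) (hB : ∀ z, ‖g z‖ ≤ B) (a : ℝ → ℝ) (ha : Continuous a) (A : ℝ) (hA : ∀ t, |a t| ≤ A)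
    (r : ℝ) (hr : 0 ≤ r) :
    ∃ α : ℝ × ℝ → ℝ → ℝ × ℝ, (∀ x ∈ Metric.closedBall 0 r, α x 0 = x ∧
      ∀ t ∈ Set.Icc 0 T, HasDerivWithinAt (α x) ((a t, 0) + g (α x t)) (Set.Icc 0 T) t) ∧
      ContinuousOn (fun x => α x T) (Metric.closedBall 0 r) := by
  have hA0 : 0 ≤ A := (abs_nonneg _).trans (hA 0)
  have hB0 : 0 ≤ B := (norm_nonneg _).trans (hB 0)
  have hPL : IsPicardLindelof (fun t z => (a t, (0 : ℝ)) + g z) (tmin := 0) (tmax := T)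
      ⟨0, le_rfl, hT.le⟩ 0 ⟨r + (A + B) * T, by positivity⟩ ⟨r, hr⟩ ⟨A + B, by positivity⟩ K :=
    { lipschitzOnWith := fun t _ => by
        have := (LipschitzWith.const (α := ℝ × ℝ) (a t, (0 : ℝ))).add hg
        rw [zero_add] at this
        exact this.lipschitzOnWith
      continuousOn := fun x _ => by fun_prop
      norm_le := fun t _ x _ => by
        refine (norm_add_le _ _).trans (add_le_add ?_ (hB x))
        simpa [Prod.norm_def] using hA t
      mul_max_le := by
        have : max (T - 0) (0 - 0) = T := by simp [hT.le]
        change (A + B) * max (T - 0) (0 - 0) ≤ r + (A + B) * T - r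
        rw [this]
        linarith }
  obtain ⟨α, h1, L', h2⟩ :=
    hPL.exists_forall_mem_closedBall_eq_hasDerivWithinAt_lipschitzOnWith
  exact ⟨α, h1, (h2 T ⟨hT.le, le_rfl⟩).continuousOn⟩

/-- A solution on `[0, T]` of a `T`-periodic equation that closes up extends to a periodic solution
on the line. -/
lemma exists_periodic_extension {E : Type*} [NormedAddCommGroup E] [NormedSpace ℝ E]
    [CompleteSpace E] {T : ℝ} (hT : 0 < T) (f : ℝ → E → E)
    (hf : Continuous fun p : ℝ × E => f p.1 p.2) (hper : ∀ t z, f (t + T) z = f t z)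
    (z : ℝ → E) (hz : ∀ t ∈ Set.Icc 0 T, HasDerivWithinAt z (f t (z t)) (Set.Icc 0 T) t)
    (hclose : z T = z 0) :
    ∃ y : ℝ → E, (∀ t, y (t + T) = y t) ∧ ∀ t, HasDerivAt y (f t (y t)) t := by
  have : Fact (0 < T) := ⟨hT⟩
  have hzc : ContinuousOn z (Set.Icc 0 T) := fun t ht => (hz t ht).continuousWithinAt
  -- `w` is the periodic continuation of `z`; the antiderivative `y` of `f t (w t)` equals it, which
  -- gives differentiability at the multiples of `T` as well
  set w : ℝ → E := fun t => AddCircle.liftIco T 0 z (t : AddCircle T) with hw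
  have hwc : Continuous w :=
    (AddCircle.liftIco_continuous (by rw [zero_add, hclose]) (by rwa [zero_add])).comp
      (AddCircle.continuous_mk' T)
  have hwp : Function.Periodic w T := fun t => by simp [hw]
  have hwz : ∀ t ∈ Set.Icc 0 T, w t = z t := by
    intro t ht
    rcases ht.2.eq_or_lt with rfl | h
    · have h0 := hwp 0
      rw [zero_add] at h0
      rw [hclose, h0]
      exact AddCircle.liftIco_zero_coe_apply ⟨le_rfl, hT⟩
    · exact AddCircle.liftIco_zero_coe_apply ⟨ht.1, h⟩
  have hfc : Continuous fun t => f t (w t) := hf.comp (continuous_id.prodMk hwc)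
  have hfp : Function.Periodic (fun t => f t (w t)) T := fun t => by
    simp only [hwp t, hper]
  have hint : ∀ t ∈ Set.Icc 0 T, ∫ s in (0 : ℝ)..t, f s (w s) = z t - z 0 := by
    intro t ht
    have e : ∫ s in (0 : ℝ)..t, f s (w s) = ∫ s in (0 : ℝ)..t, f s (z s) := by
      refine intervalIntegral.integral_congr fun s hs => ?_
      rw [Set.uIcc_of_le ht.1] at hs
      simp only [hwz s ⟨hs.1, hs.2.trans ht.2⟩]
    rw [e]
    refine intervalIntegral.integral_eq_sub_of_hasDerivAt_of_le ht.1
      (hzc.mono (Set.Icc_subset_Icc_right ht.2)) (fun s hs => ?_) ?_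
    · exact (hz s ⟨hs.1.le, hs.2.le.trans ht.2⟩).hasDerivAt
        (Icc_mem_nhds hs.1 (hs.2.trans_le ht.2))
    · refine (ContinuousOn.congr hfc.continuousOn fun s hs => ?_).intervalIntegrable
      rw [Set.uIcc_of_le ht.1] at hs
      simp only [hwz s ⟨hs.1, hs.2.trans ht.2⟩]
  set y : ℝ → E := fun t => z 0 + ∫ s in (0 : ℝ)..t, f s (w s) with hy
  have hyz : ∀ t ∈ Set.Icc 0 T, y t = z t := fun t ht => by simp [hy, hint t ht]
  have hyp : Function.Periodic y T := by
    intro t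
    have h1 := hfp.intervalIntegral_add_eq t 0
    rw [zero_add, hint T ⟨hT.le, le_rfl⟩, hclose, sub_self] at h1
    simp only [hy]
    rw [← intervalIntegral.integral_add_adjacent_intervals (hfc.intervalIntegrable 0 t)
      (hfc.intervalIntegrable t (t + T)), h1, add_zero]
  have hyw : y = w := by
    funext t
    obtain ⟨s, hs, h⟩ := (hyp.sub hwp).exists_mem_Ico₀ hT t
    have hs' : s ∈ Set.Icc 0 T := ⟨hs.1, hs.2.le⟩
    have : y t - w t = y s - w s := h
    rw [hyz s hs', hwz s hs', sub_self] at this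
    exact sub_eq_zero.1 this
  refine ⟨y, hyp, fun t => ?_⟩
  have h1 := (intervalIntegral.integral_hasDerivAt_right (hfc.intervalIntegrable 0 t)
    (hfc.stronglyMeasurableAtFilter _ _) hfc.continuousAt).const_add (z 0)
  have h2 : f t (y t) = f t (w t) := by rw [hyw]
  rw [h2]
  exact h1

/-! ### The lagoon system in logarithmic variables -/

/-- The lagoon system in logarithmic variables `u = log x₁`, `v = log x₂`, on the time set `s`,
with `a` standing for the forced growth rate `λ₁ (M + N sin (π t / 6 + 1))`. -/
def IsLogSolOn (l2 l3 l4 l5 k : ℝ) (a u v : ℝ → ℝ) (s : Set ℝ) : Prop :=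
  ∀ t ∈ s,
    HasDerivWithinAt u (a t - l2 * exp (u t) - l3 * exp (v t) / (k + exp (u t))) s t ∧
    HasDerivWithinAt v (l4 * exp (u t) / (k + exp (u t)) - l5) s t

lemma exists_lipschitzWith_exp_min (U : ℝ) :
    ∃ K : NNReal, LipschitzWith K fun x : ℝ => exp (min x U) := by
  have h1 : LipschitzOnWith ⟨exp U, (exp_pos U).le⟩ exp (Set.Iic U) :=
    (convex_Iic U).lipschitzOnWith_of_nnnorm_hasDerivWithin_le
      (fun x _ => (hasDerivAt_exp x).hasDerivWithinAt) fun x hx => by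
        change ‖exp x‖ ≤ exp U
        rw [Real.norm_of_nonneg (exp_pos x).le]
        exact exp_le_exp.2 hx
  have h2 := h1.comp (LipschitzWith.id.min_const U).lipschitzOnWith (s := Set.univ)
    fun x _ => Set.mem_Iic.2 (min_le_right _ _)
  exact ⟨_, lipschitzOnWith_univ.1 h2⟩

/-- The flow of the logarithmic system over one period.  The field is made bounded and Lipschitz by
cutting `u` and `v` off from above; since the growth rates of both are bounded above, the cut-off
is inactive along orbits with initial points in the prescribed region. -/
lemma exists_log_flow {l2 l3 l4 l5 k : ℝ} (h2 : 0 < l2) (h3 : 0 < l3) (h4 : 0 < l4) (h5 : 0 < l5)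
    (hk : 0 < k) (a : ℝ → ℝ) (ha : Continuous a) (A : ℝ) (hA : ∀ t, |a t| ≤ A)
    (U₀ V₀ r : ℝ) (hr : 0 ≤ r) :
    ∃ α : ℝ × ℝ → ℝ → ℝ × ℝ, ContinuousOn (fun x => α x 12) (Metric.closedBall 0 r) ∧
      ∀ x ∈ Metric.closedBall 0 r, x.1 ≤ U₀ → x.2 ≤ V₀ → α x 0 = x ∧
        IsLogSolOn l2 l3 l4 l5 k a (fun t => (α x t).1) (fun t => (α x t).2) (Set.Icc 0 12) := by
  have hA0 : 0 ≤ A := (abs_nonneg _).trans (hA 0)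
  set U := U₀ + 12 * A with hU
  set V := V₀ + 12 * l4 with hV
  set box : Set (ℝ × ℝ) := Set.Icc 0 (exp U) ×ˢ Set.Icc 0 (exp V) with hbox
  have hboxc : IsCompact box := isCompact_Icc.prod isCompact_Icc
  have hboxv : Convex ℝ box := (convex_Icc _ _).prod (convex_Icc _ _)
  set g₀ : ℝ × ℝ → ℝ × ℝ := fun p =>
    (-(l2 * p.1) - l3 * p.2 / (k + p.1), l4 * p.1 / (k + p.1) - l5) with hg₀
  have hg₀c : ContDiffOn ℝ 1 g₀ box := by
    have hne : ∀ p ∈ box, k + p.1 ≠ 0 := fun p hp => (add_pos_of_pos_of_nonneg hk hp.1.1).ne'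
    have hden : ContDiffOn ℝ 1 (fun p : ℝ × ℝ => k + p.1) box := by fun_prop
    refine ContDiffOn.prodMk ?_ ?_
    · exact ContDiffOn.sub (by fun_prop) (ContDiffOn.div (by fun_prop) hden hne)
    · exact ContDiffOn.sub (ContDiffOn.div (by fun_prop) hden hne) (by fun_prop)
  obtain ⟨K₀, hK₀⟩ := (hg₀c.locallyLipschitzOn hboxv).exists_lipschitzOnWith_of_compact hboxc
  obtain ⟨B, hB⟩ := hboxc.exists_bound_of_continuousOn hg₀c.continuousOn
  obtain ⟨K₁, hK₁⟩ := exists_lipschitzWith_exp_min U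
  obtain ⟨K₂, hK₂⟩ := exists_lipschitzWith_exp_min V
  set c : ℝ × ℝ → ℝ × ℝ := fun p => (exp (min p.1 U), exp (min p.2 V)) with hc
  have hcl := (hK₁.comp LipschitzWith.prod_fst).prodMk (hK₂.comp LipschitzWith.prod_snd)
  have hcb : ∀ p, c p ∈ box := fun p =>
    ⟨⟨(exp_pos _).le, exp_le_exp.2 (min_le_right _ _)⟩,
      ⟨(exp_pos _).le, exp_le_exp.2 (min_le_right _ _)⟩⟩
  have hgl := lipschitzOnWith_univ.1
    (hK₀.comp (hcl.lipschitzOnWith (s := Set.univ)) fun p _ => hcb p)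
  obtain ⟨α, hα, hαc⟩ := exists_flow 12 (by norm_num) _ _ hgl B (fun p => hB _ (hcb p)) a ha A hA
    r hr
  refine ⟨α, hαc, fun x hx hx1 hx2 => ⟨(hα x hx).1, ?_⟩⟩
  have h0 := (hα x hx).1
  have hd1 : ∀ t ∈ Set.Icc (0 : ℝ) 12, HasDerivWithinAt (fun t => (α x t).1)
      (a t + (g₀ (c (α x t))).1) (Set.Icc 0 12) t := fun t ht =>
    ((hα x hx).2 t ht).hasFDerivWithinAt.fst.hasDerivWithinAt.congr_deriv (by simp; rfl)
  have hd2 : ∀ t ∈ Set.Icc (0 : ℝ) 12, HasDerivWithinAt (fun t => (α x t).2)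
      ((g₀ (c (α x t))).2) (Set.Icc 0 12) t := fun t ht =>
    ((hα x hx).2 t ht).hasFDerivWithinAt.snd.hasDerivWithinAt.congr_deriv (by simp; rfl)
  have hb1 : ∀ t ∈ Set.Icc (0 : ℝ) 12, (α x t).1 ≤ U := by
    intro t ht
    have := sub_le_of_hasDerivWithinAt_le hd1 (C := A) (fun s _ => ?_) ⟨le_rfl, by norm_num⟩ ht ht.1
    · simp only [h0] at this
      nlinarith [ht.1, ht.2]
    · have e1 := (abs_le.1 (hA s)).2
      have p1 : 0 < (c (α x s)).1 := exp_pos _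
      have p2 : 0 < (c (α x s)).2 := exp_pos _
      have : 0 < l3 * (c (α x s)).2 / (k + (c (α x s)).1) := by positivity
      have : 0 < l2 * (c (α x s)).1 := by positivity
      simp only [hg₀]
      linarith
  have hb2 : ∀ t ∈ Set.Icc (0 : ℝ) 12, (α x t).2 ≤ V := by
    intro t ht
    have := sub_le_of_hasDerivWithinAt_le hd2 (C := l4) (fun s _ => ?_) ⟨le_rfl, by norm_num⟩ ht
      ht.1
    · simp only [h0] at this
      nlinarith [ht.1, ht.2]
    · have p1 : 0 < (c (α x s)).1 := exp_pos _
      have : l4 * (c (α x s)).1 / (k + (c (α x s)).1) ≤ l4 := by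
        rw [div_le_iff₀ (by positivity)]
        nlinarith
      simp only [hg₀]
      linarith
  intro t ht
  refine ⟨(hd1 t ht).congr_deriv ?_, (hd2 t ht).congr_deriv ?_⟩
  · simp only [hg₀, hc, min_eq_left (hb1 t ht), min_eq_left (hb2 t ht)]
    ring
  · simp only [hg₀, hc, min_eq_left (hb1 t ht)]

/-- The logarithmic growth rate of the predator is positive when the prey exceeds `λ₅ k / (λ₄ - λ₅)`. -/
lemma growth_pos_of_lt {l4 l5 k X : ℝ} (hk : 0 < k) (h45 : l5 < l4) (hX : 0 < X)
    (h : l5 * k / (l4 - l5) < X) : 0 < l4 * X / (k + X) - l5 := by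
  rw [div_lt_iff₀ (sub_pos.2 h45)] at h
  rw [sub_pos, lt_div_iff₀ (by positivity)]
  linarith

lemma growth_neg_of_lt {l4 l5 k X : ℝ} (hk : 0 < k) (h45 : l5 < l4) (hX : 0 < X)
    (h : X < l5 * k / (l4 - l5)) : l4 * X / (k + X) - l5 < 0 := by
  rw [lt_div_iff₀ (sub_pos.2 h45)] at h
  rw [sub_neg, div_lt_iff₀ (by positivity)]
  linarith

lemma growth_le {l4 l5 k X : ℝ} (h4 : 0 < l4) (h5 : 0 < l5) (hk : 0 < k) (hX : 0 < X) :
    l4 * X / (k + X) - l5 ≤ l4 := by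
  have : l4 * X / (k + X) ≤ l4 := by
    rw [div_le_iff₀ (by positivity)]
    nlinarith
  linarith

/-- Existence of a positive periodic solution, in logarithmic variables.  The displacement
`(u, v) ↦ (u(12) - u(0), v(12) - v(0))` is fed to `planar_zero` on a large rectangle. -/
lemma exists_periodic_log {l2 l3 l4 l5 k : ℝ} (h2 : 0 < l2) (h3 : 0 < l3) (h4 : 0 < l4)
    (h5 : 0 < l5) (hk : 0 < k) (h45 : l5 < l4) (a : ℝ → ℝ) (ha : Continuous a)
    (hper : ∀ t, a (t + 12) = a t) (m A : ℝ) (hm : ∀ t, m ≤ a t) (hA : ∀ t, a t ≤ A)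
    (hr : l2 * (l5 * k / (l4 - l5)) < m) :
    ∃ u v : ℝ → ℝ, (∀ t, u (t + 12) = u t) ∧ (∀ t, v (t + 12) = v t) ∧
      IsLogSolOn l2 l3 l4 l5 k a u v Set.univ := by
  set ρ := l5 * k / (l4 - l5) with hρ
  have hρ0 : 0 < ρ := div_pos (mul_pos h5 hk) (sub_pos.2 h45)
  have hm0 : 0 < m := (mul_pos h2 hρ0).trans hr
  have hmA : m ≤ A := (hm 0).trans (hA 0)
  have hA0 : 0 < A := hm0.trans_le hmA
  have habs : ∀ t, |a t| ≤ A := fun t => abs_le.2 ⟨by linarith [hm t], hA t⟩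
  -- `uR` is where logistic growth stops; from `uL` the prey cannot reach `ρ` within one period
  set uR := log (A / l2) with huR
  set uL := log ρ - 12 * A - 1 with huL
  set U := uR + 12 * A with hU
  -- above `vT` predation beats growth throughout the period; below `vB` it is negligible
  set vT := log (2 * A * (k + exp U) / l3) + 12 * l5 with hvT
  set vB := min (log (k * ((m - l2 * ρ) / 2) / l3) - 12 * l4) vT with hvB
  have eR : exp uR = A / l2 := exp_log (by positivity)
  have hLR : uL ≤ uR := by
    have : log ρ ≤ uR := log_le_log hρ0 (by rw [le_div_iff₀ h2]; linarith)
    simp only [huL]; linarith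
  have hBT : vB ≤ vT := min_le_right _ _
  set r := |uL| + |uR| + |vB| + |vT| with hrdef
  obtain ⟨α, hαc, hα⟩ := exists_log_flow h2 h3 h4 h5 hk a ha A habs uR vT r (by positivity)
  have hsub : Set.Icc uL uR ×ˢ Set.Icc vB vT ⊆ Metric.closedBall (0 : ℝ × ℝ) r := by
    rintro ⟨x, y⟩ ⟨hx, hy⟩
    have h1 := abs_le_max_abs_abs hx.1 hx.2
    have h2 := abs_le_max_abs_abs hy.1 hy.2
    have h3 : max |uL| |uR| ≤ |uL| + |uR| :=
      max_le (by linarith [abs_nonneg uR]) (by linarith [abs_nonneg uL])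
    have h4 : max |vB| |vT| ≤ |vB| + |vT| :=
      max_le (by linarith [abs_nonneg vT]) (by linarith [abs_nonneg vB])
    have := abs_nonneg uL
    have := abs_nonneg uR
    have := abs_nonneg vB
    have := abs_nonneg vT
    rw [mem_closedBall_zero_iff, Prod.norm_def]
    simp only [Real.norm_eq_abs] at *
    exact max_le (by linarith) (by linarith)
  have hsol : ∀ x ∈ Set.Icc uL uR, ∀ y ∈ Set.Icc vB vT, ∃ u v : ℝ → ℝ,
      u 0 = x ∧ v 0 = y ∧ u 12 = (α (x, y) 12).1 ∧ v 12 = (α (x, y) 12).2 ∧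
      IsLogSolOn l2 l3 l4 l5 k a u v (Set.Icc 0 12) := by
    intro x hx y hy
    obtain ⟨e, h⟩ := hα (x, y) (hsub ⟨hx, hy⟩) hx.2 hy.2
    exact ⟨_, _, by simp only [e], by simp only [e], rfl, rfl, h⟩
  have h12 : (0 : ℝ) < 12 := by norm_num
  have m0 : (0 : ℝ) ∈ Set.Icc (0 : ℝ) 12 := ⟨le_rfl, h12.le⟩
  have upre : ∀ u v, IsLogSolOn l2 l3 l4 l5 k a u v (Set.Icc 0 12) →
      ∀ t ∈ Set.Icc (0 : ℝ) 12, u t ≤ u 0 + 12 * A := by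
    intro u v h t ht
    have := sub_le_of_hasDerivWithinAt_le (fun t ht => (h t ht).1) (C := A) (fun s _ => ?_) m0 ht
      ht.1
    · nlinarith [ht.1, ht.2]
    · have : 0 < l3 * exp (v s) / (k + exp (u s)) := by positivity
      have : 0 < l2 * exp (u s) := by positivity
      linarith [hA s]
  have vup : ∀ u v, IsLogSolOn l2 l3 l4 l5 k a u v (Set.Icc 0 12) →
      ∀ t ∈ Set.Icc (0 : ℝ) 12, v t ≤ v 0 + 12 * l4 := by
    intro u v h t ht
    have := sub_le_of_hasDerivWithinAt_le (fun t ht => (h t ht).2) (C := l4)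
      (fun s _ => growth_le h4 h5 hk (exp_pos _)) m0 ht ht.1
    nlinarith [ht.1, ht.2]
  have vlow : ∀ u v, IsLogSolOn l2 l3 l4 l5 k a u v (Set.Icc 0 12) →
      ∀ t ∈ Set.Icc (0 : ℝ) 12, v 0 - 12 * l5 ≤ v t := by
    intro u v h t ht
    have := sub_le_of_hasDerivWithinAt_le (fun t ht => (h t ht).2.neg) (C := l5)
      (fun s _ => ?_) m0 ht ht.1
    · simp only [Pi.neg_apply] at this
      nlinarith [ht.1, ht.2]
    · have : 0 < l4 * exp (u s) / (k + exp (u s)) := by positivity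
      linarith
  obtain ⟨⟨x, y⟩, ⟨hx, hy⟩, hF, hG⟩ := planar_zero
    (fun x => (α x 12).1 - x.1) (fun x => (α x 12).2 - x.2) hLR hBT
    ((continuous_fst.comp_continuousOn (hαc.mono hsub)).sub continuous_fst.continuousOn)
    ((continuous_snd.comp_continuousOn (hαc.mono hsub)).sub continuous_snd.continuousOn)
    (by
      intro y hy
      obtain ⟨u, v, e1, rfl, -, e, h⟩ := hsol uL ⟨le_rfl, hLR⟩ y hy
      simp only [← e, sub_neg]
      refine lt_of_hasDerivWithinAt_neg h12 (fun t ht => (h t ht).2) fun t ht => ?_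
      refine growth_neg_of_lt hk h45 (exp_pos _) ?_
      rw [← hρ, ← lt_log_iff_exp_lt hρ0]
      have := upre u v h t ht
      rw [e1] at this
      simp only [huL] at this
      linarith)
    (by
      intro y hy
      obtain ⟨u, v, e1, rfl, e, -, h⟩ := hsol uR ⟨hLR, le_rfl⟩ y hy
      simp only [← e]
      by_contra! hc
      obtain ⟨t, ht, hd, hmax⟩ := exists_max_deriv_nonneg h12 (fun t ht => (h t ht).1)
        (by rw [e1]; linarith)
      have h1 := exp_le_exp.2 (hmax 0 m0)
      rw [e1, eR, div_le_iff₀ h2] at h1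
      have : 0 < l3 * exp (v t) / (k + exp (u t)) := by positivity
      linarith [hA t])
    (by
      intro x hx
      obtain ⟨u, v, rfl, e1, e, -, h⟩ := hsol x hx vT ⟨hBT, le_rfl⟩
      simp only [← e, sub_neg]
      refine lt_of_hasDerivWithinAt_neg h12 (fun t ht => (h t ht).1) fun t ht => ?_
      have b1 : exp (u t) ≤ exp U := exp_le_exp.2 ((upre u v h t ht).trans (by linarith [hx.2]))
      have b2 : 2 * A * (k + exp U) / l3 ≤ exp (v t) := by
        rw [← log_le_iff_le_exp (by positivity)]
        have := vlow u v h t ht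
        rw [e1] at this
        simp only [hvT] at this
        linarith
      rw [div_le_iff₀ h3] at b2
      have : 2 * A ≤ l3 * exp (v t) / (k + exp (u t)) := by
        rw [le_div_iff₀ (by positivity)]
        nlinarith
      have : 0 < l2 * exp (u t) := by positivity
      linarith [hA t])
    (by
      intro x hx
      obtain ⟨u, v, rfl, e1, e, e', h⟩ := hsol x hx vB ⟨le_rfl, hBT⟩
      simp only [← e, ← e', sub_pos]
      by_contra! hc
      -- the prey does not grow over the period, so it is large at its minimum, hence always
      obtain ⟨t, ht, hd, hmin⟩ := exists_min_deriv_nonpos h12 (fun t ht => (h t ht).1) hc.1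
      have b : exp (v t) ≤ k * ((m - l2 * ρ) / 2) / l3 := by
        have hp : 0 < m - l2 * ρ := sub_pos.2 hr
        rw [← le_log_iff_exp_le (by positivity)]
        have h1 := vup u v h t ht
        have h2 : vB ≤ _ := min_le_left _ _
        rw [e1] at h1
        linarith
      rw [le_div_iff₀ h3] at b
      have b' : l3 * exp (v t) / (k + exp (u t)) ≤ (m - l2 * ρ) / 2 := by
        rw [div_le_iff₀ (by positivity)]
        nlinarith [exp_pos (u t)]
      have hlow : ρ < exp (u t) := by
        by_contra! hle
        nlinarith [hm t]
      have := lt_of_hasDerivWithinAt_neg h12 (fun t ht => (h t ht).2.neg) fun s hs => by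
        have := growth_pos_of_lt hk h45 (exp_pos (u s))
          (hlow.trans_le (exp_le_exp.2 (hmin s hs)))
        linarith
      simp only [Pi.neg_apply] at this
      linarith [hc.2])
  obtain ⟨u, v, e1, e2, e3, e4, h⟩ := hsol x hx y hy
  obtain ⟨z, hzp, hz⟩ := exists_periodic_extension h12
    (fun t (p : ℝ × ℝ) => (a t - l2 * exp p.1 - l3 * exp p.2 / (k + exp p.1),
      l4 * exp p.1 / (k + exp p.1) - l5))
    (by
      have hne : ∀ p : ℝ × ℝ × ℝ, k + exp p.2.1 ≠ 0 := fun p => by positivity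
      have hd : Continuous fun p : ℝ × ℝ × ℝ => k + exp p.2.1 := by fun_prop
      exact ((by fun_prop : Continuous fun p : ℝ × ℝ × ℝ => a p.1 - l2 * exp p.2.1).sub
        ((by fun_prop : Continuous fun p : ℝ × ℝ × ℝ => l3 * exp p.2.2).div hd hne)).prodMk
        (((by fun_prop : Continuous fun p : ℝ × ℝ × ℝ => l4 * exp p.2.1).div hd hne).sub
          continuous_const))
    (fun t p => by simp only [hper]) (fun t => (u t, v t))
    (fun t ht => (h t ht).1.prodMk (h t ht).2)
    (by simp only at hF hG; rw [e1, e2, e3, e4]; exact Prod.ext (by linarith) (by linarith))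
  refine ⟨fun t => (z t).1, fun t => (z t).2, fun t => by simp only [hzp],
    fun t => by simp only [hzp], fun t _ => ⟨?_, ?_⟩⟩
  · exact (hz t).hasFDerivAt.fst.hasDerivAt.hasDerivWithinAt.congr_deriv (by simp)
  · exact (hz t).hasFDerivAt.snd.hasDerivAt.hasDerivWithinAt.congr_deriv (by simp)

/-! ### A priori bounds -/

lemma le_add_of_periodic_of_deriv_le {h h' : ℝ → ℝ} (hper : ∀ t, h (t + 12) = h t)
    (hd : ∀ t, HasDerivAt h (h' t) t) {C : ℝ} (hC0 : 0 ≤ C) (hC : ∀ t, h' t ≤ C) (s t : ℝ) :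
    h t ≤ h s + 12 * C := by
  have hp : Function.Periodic h 12 := hper
  obtain ⟨t', ht', e⟩ := hp.exists_mem_Ico (by norm_num) t s
  have := image_sub_le_mul_sub_of_deriv_le (fun t => (hd t).differentiableAt) (C := C)
    (fun t => by rw [(hd t).deriv]; exact hC t) ht'.1
  rw [e]
  nlinarith [ht'.1, ht'.2]

lemma exists_global_min_of_periodic {h h' : ℝ → ℝ} (hper : ∀ t, h (t + 12) = h t)
    (hd : ∀ t, HasDerivAt h (h' t) t) : ∃ t, h' t = 0 ∧ ∀ s, h t ≤ h s := by
  have hp : Function.Periodic h 12 := hper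
  obtain ⟨t, -, hmin⟩ := isCompact_Icc.exists_isMinOn
    (Set.nonempty_Icc.2 (by norm_num : (0 : ℝ) ≤ 12))
    (fun x _ => (hd x).continuousAt.continuousWithinAt : ContinuousOn h (Set.Icc 0 12))
  have hall : ∀ s, h t ≤ h s := by
    intro s
    obtain ⟨s', hs', e⟩ := hp.exists_mem_Ico₀ (by norm_num) s
    rw [e]
    exact hmin ⟨hs'.1, hs'.2.le⟩
  have hloc : IsLocalMin h t := Filter.Eventually.of_forall hall
  exact ⟨t, hloc.hasDerivAt_eq_zero (hd t), hall⟩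

lemma exists_global_max_of_periodic {h h' : ℝ → ℝ} (hper : ∀ t, h (t + 12) = h t)
    (hd : ∀ t, HasDerivAt h (h' t) t) : ∃ t, h' t = 0 ∧ ∀ s, h s ≤ h t := by
  obtain ⟨t, h1, h2⟩ := exists_global_min_of_periodic (h := fun t => -h t) (h' := fun t => -h' t)
    (fun t => by simp only [hper]) (fun t => (hd t).neg)
  exact ⟨t, by simpa using h1, fun s => by simpa using h2 s⟩

/-- A priori bounds for every positive periodic solution.  The mean of `v'` vanishes, so the prey
is at most `ρ` at its minimum and at least `ρ` at its maximum; at those two times the prey equation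
determines the predator, and all other times differ from them by at most one period. -/
lemma apriori_bounds {l2 l3 l4 l5 k : ℝ} (h2 : 0 < l2) (h3 : 0 < l3) (h4 : 0 < l4)
    (h5 : 0 < l5) (hk : 0 < k) (h45 : l5 < l4) (a : ℝ → ℝ) (m A : ℝ) (hm : ∀ t, m ≤ a t)
    (hA : ∀ t, a t ≤ A) {ρ p R : ℝ} (hρ : ρ = l5 * k / (l4 - l5)) (hr : l2 * ρ < m)
    (hp : p = A / l2)
    (hR : R = (k + ρ) * (A - l2 * ρ) / l3 * exp (12 * (l4 * p / (k + p))))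
    (u v : ℝ → ℝ) (hu : ∀ t, u (t + 12) = u t) (hv : ∀ t, v (t + 12) = v t)
    (hsol : IsLogSolOn l2 l3 l4 l5 k a u v Set.univ) :
    exp (u 0) ≤ p ∧ exp (v 0) ≤ R ∧
      ρ * exp (-(12 * (l2 * p + l3 * R / k))) ≤ exp (u 0) ∧
      k * (m - l2 * ρ) / l3 * exp (-(12 * l5)) ≤ exp (v 0) := by
  have hρ0 : 0 < ρ := hρ ▸ div_pos (mul_pos h5 hk) (sub_pos.2 h45)
  have hm0 : 0 < m := (mul_pos h2 hρ0).trans hr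
  have hmA : m ≤ A := (hm 0).trans (hA 0)
  have hA0 : 0 < A := hm0.trans_le hmA
  have hp0 : 0 < p := hp ▸ div_pos hA0 h2
  have du : ∀ t, HasDerivAt u (a t - l2 * exp (u t) - l3 * exp (v t) / (k + exp (u t))) t :=
    fun t => hasDerivWithinAt_univ.1 (hsol t trivial).1
  have dv : ∀ t, HasDerivAt v (l4 * exp (u t) / (k + exp (u t)) - l5) t :=
    fun t => hasDerivWithinAt_univ.1 (hsol t trivial).2
  have hv12 : v 12 = v 0 := by simpa using hv 0
  obtain ⟨t1, z1, min1⟩ := exists_global_min_of_periodic hu du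
  obtain ⟨t2, z2, max2⟩ := exists_global_max_of_periodic hu du
  have x1 : exp (u t1) ≤ ρ := by
    by_contra! hc
    have := lt_of_hasDerivWithinAt_neg (T := 12) (by norm_num)
      (fun t _ => (dv t).neg.hasDerivWithinAt) fun s _ => by
        have := growth_pos_of_lt hk h45 (exp_pos (u s))
          (hρ ▸ hc.trans_le (exp_le_exp.2 (min1 s)))
        linarith
    simp only [Pi.neg_apply] at this
    linarith
  have x2 : ρ ≤ exp (u t2) := by
    by_contra! hc
    have := lt_of_hasDerivWithinAt_neg (T := 12) (by norm_num)
      (fun t _ => (dv t).hasDerivWithinAt) fun s _ =>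
        growth_neg_of_lt hk h45 (exp_pos (u s))
          (hρ ▸ (exp_le_exp.2 (max2 s)).trans_lt hc)
    linarith
  have y1 : l3 * exp (v t1) = (k + exp (u t1)) * (a t1 - l2 * exp (u t1)) := by
    have hne : k + exp (u t1) ≠ 0 := by positivity
    field_simp at z1
    linarith
  have y2 : l3 * exp (v t2) = (k + exp (u t2)) * (a t2 - l2 * exp (u t2)) := by
    have hne : k + exp (u t2) ≠ 0 := by positivity
    field_simp at z2
    linarith
  have hup : ∀ t, exp (u t) ≤ p := by
    intro t
    refine (exp_le_exp.2 (max2 t)).trans ?_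
    have : 0 < l3 * exp (v t2) / (k + exp (u t2)) := by positivity
    rw [hp, le_div_iff₀ h2]
    linarith [hA t2]
  -- `X ↦ (k + X) (A - l2 X)` is unimodal, so it is at most its value at `ρ` on one side of `ρ`
  obtain ⟨τ, hτ⟩ : ∃ τ, exp (v τ) ≤ (k + ρ) * (A - l2 * ρ) / l3 := by
    by_contra! hc
    have c1 := hc t1
    have c2 := hc t2
    rw [div_lt_iff₀ h3, mul_comm _ l3, ← sub_pos] at c1 c2
    rw [y1] at c1
    rw [y2] at c2
    have f1 : 0 < (exp (u t1) - ρ) * (A - l2 * k - l2 * (exp (u t1) + ρ)) := by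
      nlinarith [hA t1, exp_pos (u t1)]
    have f2 : 0 < (exp (u t2) - ρ) * (A - l2 * k - l2 * (exp (u t2) + ρ)) := by
      nlinarith [hA t2, exp_pos (u t2)]
    have g1 := neg_of_mul_pos_right f1 (sub_nonpos.2 x1)
    have g2 := pos_of_mul_pos_right f2 (sub_nonneg.2 x2)
    nlinarith
  have hvR : ∀ t, exp (v t) ≤ R := by
    intro t
    have := le_add_of_periodic_of_deriv_le hv dv (C := l4 * p / (k + p)) (by positivity)
      (fun s => by
        have : l4 * exp (u s) / (k + exp (u s)) ≤ l4 * p / (k + p) := by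
          rw [div_le_div_iff₀ (by positivity) (by positivity)]
          nlinarith [mul_le_mul_of_nonneg_left (hup s) (mul_pos h4 hk).le]
        linarith) τ t
    calc exp (v t) ≤ exp (v τ + 12 * (l4 * p / (k + p))) := exp_le_exp.2 this
      _ = exp (v τ) * exp (12 * (l4 * p / (k + p))) := exp_add _ _
      _ ≤ R := by rw [hR]; gcongr
  have hR0 : 0 < R := (exp_pos _).trans_le (hvR 0)
  refine ⟨hup 0, hvR 0, ?_, ?_⟩
  · have := le_add_of_periodic_of_deriv_le (h := fun t => -u t) (fun t => by simp only [hu])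
      (fun t => (du t).neg) (C := l2 * p + l3 * R / k) (by positivity)
      (fun s => by
        have e1 : l3 * exp (v s) / (k + exp (u s)) ≤ l3 * R / k := by
          gcongr
          · exact hvR s
          · linarith [exp_pos (u s)]
        have e2 : l2 * exp (u s) ≤ l2 * p := by gcongr; exact hup s
        linarith [hm s]) t2 0
    calc ρ * exp (-(12 * (l2 * p + l3 * R / k)))
        ≤ exp (u t2) * exp (-(12 * (l2 * p + l3 * R / k))) := by gcongr
      _ = exp (u t2 + -(12 * (l2 * p + l3 * R / k))) := (exp_add _ _).symm
      _ ≤ exp (u 0) := exp_le_exp.2 (by linarith)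
  · have := le_add_of_periodic_of_deriv_le (h := fun t => -v t) (fun t => by simp only [hv])
      (fun t => (dv t).neg) (C := l5) h5.le
      (fun s => by
        have : 0 < l4 * exp (u s) / (k + exp (u s)) := by positivity
        linarith) t1 0
    have hy : k * (m - l2 * ρ) / l3 ≤ exp (v t1) := by
      rw [div_le_iff₀ h3, mul_comm _ l3, y1]
      have : m - l2 * ρ ≤ a t1 - l2 * exp (u t1) := by nlinarith [hm t1]
      have hpos : 0 < m - l2 * ρ := sub_pos.2 hr
      gcongr
      linarith [exp_pos (u t1)]
    calc k * (m - l2 * ρ) / l3 * exp (-(12 * l5))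
        ≤ exp (v t1) * exp (-(12 * l5)) := by gcongr
      _ = exp (v t1 + -(12 * l5)) := (exp_add _ _).symm
      _ ≤ exp (v 0) := exp_le_exp.2 (by linarith)

/-! ### The lagoon system -/

/-- Existence of a 12-periodic solution of the lagoon system with initial value
in the prescribed rectangle. -/
theorem lagoon_periodic_solution
    (l1 l2 l3 l4 l5 k M N0 : ℝ)
    (h1 : 0 < l1) (h2 : 0 < l2) (h3 : 0 < l3) (h4 : 0 < l4) (h5 : 0 < l5)
    (hk : 0 < k) (hM : 0 < M) (h45 : l5 < l4) (hN0 : 0 ≤ N0)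
    (hcond : l1 / l2 * (M - N0) > l5 * k / (l4 - l5)) :
    ∃ η > 0, ∀ N ∈ Set.Icc (0 : ℝ) N0,
      ∃ x1 x2 : ℝ → ℝ,
        Differentiable ℝ x1 ∧ Differentiable ℝ x2 ∧
        (∀ t : ℝ, deriv x1 t =
            l1 * (M + N * Real.sin (π * t / 6 + 1)) * x1 t
              - l2 * (x1 t) ^ 2 - l3 * x2 t * (x1 t / (k + x1 t))) ∧
        (∀ t : ℝ, deriv x2 t =
            l4 * x2 t * (x1 t / (k + x1 t)) - l5 * x2 t) ∧
        (∀ t : ℝ, x1 (t + 12) = x1 t) ∧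
        (∀ t : ℝ, x2 (t + 12) = x2 t) ∧
        η ≤ x1 0 ∧ x1 0 ≤ l1 / l2 * (M + N) + η ∧
        η ≤ x2 0 ∧
        x2 0 ≤
          max 1 ((k + l5 * k / (l4 - l5)) *
              (l1 * (M + N) - l2 * (l5 * k / (l4 - l5))) / l3) *
            Real.exp (12 * l4 * (l1 / l2 * (M + N)) / (k + l1 / l2 * (M + N))
              + 12 * l5) + η := by
  set ρ := l5 * k / (l4 - l5) with hρ
  have hρ0 : 0 < ρ := div_pos (mul_pos h5 hk) (sub_pos.2 h45)
  have hm : l2 * ρ < l1 * (M - N0) := by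
    rw [gt_iff_lt, div_mul_eq_mul_div, lt_div_iff₀ h2] at hcond
    linarith
  have hlow : ∀ N ∈ Set.Icc (0 : ℝ) N0, ∀ t : ℝ,
      l1 * (M - N0) ≤ l1 * (M + N * Real.sin (π * t / 6 + 1)) := by
    intro N hN t
    refine mul_le_mul_of_nonneg_left ?_ h1.le
    nlinarith [neg_one_le_sin (π * t / 6 + 1), hN.1, hN.2]
  have hupp : ∀ N ∈ Set.Icc (0 : ℝ) N0, ∀ t : ℝ,
      l1 * (M + N * Real.sin (π * t / 6 + 1)) ≤ l1 * (M + N) := by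
    intro N hN t
    refine mul_le_mul_of_nonneg_left ?_ h1.le
    nlinarith [sin_le_one (π * t / 6 + 1), hN.1]
  set A₀ := l1 * (M + N0) with hA₀
  set p₀ := A₀ / l2 with hp₀
  set R₀ := (k + ρ) * (A₀ - l2 * ρ) / l3 * exp (12 * (l4 * p₀ / (k + p₀))) with hR₀
  -- the lower a priori bounds for the largest amplitude `N0` serve all `N`
  set η := min (ρ * exp (-(12 * (l2 * p₀ + l3 * R₀ / k))))
    (k * (l1 * (M - N0) - l2 * ρ) / l3 * exp (-(12 * l5))) with hη
  have hm' : 0 < l1 * (M - N0) - l2 * ρ := sub_pos.2 hm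
  have hη0 : 0 < η := lt_min (by positivity) (by positivity)
  refine ⟨η, hη0, fun N hN => ?_⟩
  obtain ⟨u, v, hu, hv, hsol⟩ := exists_periodic_log h2 h3 h4 h5 hk h45
    (fun t => l1 * (M + N * Real.sin (π * t / 6 + 1))) (by fun_prop)
    (fun t => by
      have : π * (t + 12) / 6 + 1 = π * t / 6 + 1 + 2 * π := by ring
      simp only [this, sin_add_two_pi])
    (l1 * (M - N0)) (l1 * (M + N)) (hlow N hN) (hupp N hN) hm
  obtain ⟨b1, b2, -, -⟩ := apriori_bounds h2 h3 h4 h5 hk h45 _ (l1 * (M - N0)) (l1 * (M + N))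
    (hlow N hN) (hupp N hN) hρ hm rfl rfl u v hu hv hsol
  obtain ⟨-, -, b3, b4⟩ := apriori_bounds h2 h3 h4 h5 hk h45 _ (l1 * (M - N0)) A₀
    (hlow N hN) (fun t => (hupp N hN t).trans (by rw [hA₀]; gcongr; exact hN.2)) hρ hm hp₀ hR₀
    u v hu hv hsol
  have du := fun t => (hasDerivWithinAt_univ.1 (hsol t trivial).1).exp
  have dv := fun t => (hasDerivWithinAt_univ.1 (hsol t trivial).2).exp
  refine ⟨fun t => exp (u t), fun t => exp (v t), fun t => (du t).differentiableAt,
    fun t => (dv t).differentiableAt, fun t => ?_, fun t => ?_, fun t => by simp only [hu],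
    fun t => by simp only [hv], (min_le_left _ _).trans b3, ?_, (min_le_right _ _).trans b4, ?_⟩
  · rw [(du t).deriv]
    ring
  · rw [(dv t).deriv]
    ring
  · rw [mul_div_right_comm] at b1
    linarith
  · have hp : l1 * (M + N) / l2 = l1 / l2 * (M + N) := mul_div_right_comm _ _ _
    rw [hp] at b2
    have he : 12 * (l4 * (l1 / l2 * (M + N)) / (k + l1 / l2 * (M + N))) =
        12 * l4 * (l1 / l2 * (M + N)) / (k + l1 / l2 * (M + N)) := by ring
    rw [he] at b2
    calc exp (v 0) ≤ _ := b2
      _ ≤ max 1 ((k + ρ) * (l1 * (M + N) - l2 * ρ) / l3) *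
          exp (12 * l4 * (l1 / l2 * (M + N)) / (k + l1 / l2 * (M + N)) + 12 * l5) :=
        mul_le_mul (le_max_right _ _) (exp_le_exp.2 (by linarith)) (exp_pos _).le
          (le_trans zero_le_one (le_max_left _ _))
      _ ≤ _ := le_add_of_nonneg_right hη0.le
end

section
/- Let λ1 = 1.29, λ2 = 0.0002, λ3 = 0.93, λ4 = 6.9, λ5 = 5.8, k = 100, and let M > 0.116/1.419. Fix any N0 with 0 < N0 < M − 0.116/1.419. Then there exists η > 0 such that for every N ∈ [0, N0] the system x1′ = λ1·(M + N·sin(π t/6 + 1))·x1 − λ2·x1² − λ3·x2·x1/(k + x1), x2′ = λ4·x2·x1/(k + x1) − λ5·x2 admits at least one 12-periodic differentiable solution x_N = (x_{N,1}, x_{N,2}) with η ≤ x_{N,1}(0) ≤ (1.29/0.0002)(M + N) + η and η ≤ x_{N,2}(0) ≤ max{1, (100 + 580/1.1)·(1.29(M + N) − 0.116/1.1)/0.93}·exp(534060(M + N)/(100 + 6450(M + N)) + 69.6) + η. -/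
/-!
The solution is found in the logarithmic coordinates `u = (log x₁, log x₂)`, in which the system
reads `u' = f t u`. Truncating the two exponentials makes `f` bounded and globally Lipschitz
(`capField`), so the flow exists for all time and depends continuously on the initial value.

Periodic solutions of `u' = l • f t u`, `0 < l ≤ 1`, satisfy bounds independent of `l`
(`apriori_bounds`). The predator equation forces the prey to take values on both sides of the level
`xs` at which predator growth vanishes. At the maximum of the prey the first equation bounds the
prey from above. At its minimum, where the prey is at most `xs`, the same equation bounds the
predator from both sides, the lower bound being positive because of the threshold condition on
`M - N`. Integrating the differential inequalities over one period carries these estimates to all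
times. The upper bounds lie below the truncation levels, so the truncation is inactive on periodic solutions.

Existence follows by continuation in `l` (`exists_periodic_of_apriori`). At `l = 0` the problem
reduces to the zeros of the field averaged over a period, which is joined to the identity, up to a
quarter turn, without zeros escaping to infinity (`eq_zero_and_bounds_of_averaged`). Brouwer degree
is replaced by the existence of continuous logarithms of zero-free functions on `ℂ`
(`exists_zero_of_homotopy`). Exponentiating gives `exists_periodic_predator_prey`, and a numerical
comparison gives the stated constants.
-/

open Real

open scoped NNReal

/-! ### A planar continuation principle -/

/-- Planar continuation principle replacing Brouwer degree. If a homotopy starting at the identity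
of `ℂ` has all its zeros in a fixed ball, its endpoint has a zero. Otherwise one could build a
zero-free continuous map of the plane equal to `z ↦ z / 2` on a circle; it would have a continuous
logarithm, and the logarithm would change by `2πi` around the circle. -/
lemma exists_zero_of_homotopy (F : ℝ × ℂ → ℂ) (hF : Continuous F) (h0 : ∀ z, F (0, z) = z)
    (ρ : ℝ) (hρ : 0 < ρ)
    (hb : ∀ σ ∈ Set.Icc (0 : ℝ) 1, ∀ z, F (σ, z) = 0 → ‖z‖ < ρ) : ∃ z, F (1, z) = 0 := by
  by_contra! hne
  -- On the ball of radius `ρ` the map `g` is `F (1, ·)`. Outside it, the homotopy is run backwards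
  -- along the radial projection to the sphere, where it has no zeros.
  let g : ℂ → ℂ := fun z =>
    F (max 0 (min 1 (2 - ‖z‖ / ρ)), ((ρ / max ρ ‖z‖ : ℝ) : ℂ) * z)
  have hmax : ∀ z : ℂ, max ρ ‖z‖ ≠ 0 := fun z => (lt_of_lt_of_le hρ (le_max_left _ _)).ne'
  have hgc : Continuous g := by
    refine hF.comp (Continuous.prodMk (by fun_prop) ?_)
    refine (Complex.continuous_ofReal.comp ?_).mul continuous_id
    exact continuous_const.div (by fun_prop) hmax
  have hg0 : ∀ z, g z ≠ 0 := by
    intro z hz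
    rcases le_or_gt ‖z‖ ρ with h | h
    · have h1 : (1 : ℝ) ≤ 2 - ‖z‖ / ρ := by
        have : ‖z‖ / ρ ≤ 1 := (div_le_one hρ).2 h
        linarith
      simp only [g, min_eq_left h1] at hz
      rw [max_eq_right zero_le_one] at hz
      exact hne _ hz
    · have h2 := hb _ ⟨le_max_left _ _, max_le zero_le_one (min_le_left _ _)⟩ _ hz
      rw [max_eq_right h.le, norm_mul, Complex.norm_real, Real.norm_of_nonneg (by positivity),
        div_mul_cancel₀ _ (hρ.trans h).ne'] at h2
      exact lt_irrefl _ h2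
  have hsc : IsSimplyConnected (Set.univ : Set ℂ) := by
    have := convex_univ.contractibleSpace (s := (Set.univ : Set ℂ)) Set.univ_nonempty
    exact SimplyConnectedSpace.ofContractible _
  obtain ⟨L, hLc, hL⟩ := Complex.exists_continuousOn_eqOn_exp_comp (X := ℂ) (U := Set.univ)
    hsc isOpen_univ hgc.continuousOn (by simpa using hg0)
  have hLc' : Continuous L := continuousOn_univ.1 hLc
  have hL' : ∀ z, Complex.exp (L z) = g z := fun z => hL (Set.mem_univ z)
  -- On the circle of radius `2ρ` the map `g` is `z ↦ z / 2`, so `L z - i arg z` takes discrete values.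
  let c : ℝ → ℂ := fun θ => ((2 * ρ : ℝ) : ℂ) * Complex.exp (θ * Complex.I)
  have hcn : ∀ θ, ‖c θ‖ = 2 * ρ := by
    intro θ
    simp [c, Complex.norm_exp_ofReal_mul_I, abs_of_pos hρ]
  have hgc2 : ∀ θ, g (c θ) = ρ * Complex.exp (θ * Complex.I) := by
    intro θ
    simp only [g, hcn]
    have : (2 : ℝ) - 2 * ρ / ρ = 0 := by field_simp; ring
    rw [this, min_eq_right zero_le_one, max_self, h0, max_eq_right (by linarith)]
    simp only [c]
    push_cast
    have : (ρ : ℂ) ≠ 0 := by exact_mod_cast hρ.ne'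
    field_simp
  let h : ℝ → ℂ := fun θ => L (c θ) - θ * Complex.I
  have hhc : Continuous h := by
    refine (hLc'.comp ?_).sub (by fun_prop)
    fun_prop
  have hhexp : ∀ θ, Complex.exp (h θ) = ρ := by
    intro θ
    simp only [h]
    rw [Complex.exp_sub, hL', hgc2]
    field_simp [Complex.exp_ne_zero]
  -- Hence `(h θ - h 0) / (2πi)` is a continuous integer-valued function on `ℝ`.
  have hint : ∀ θ, ∃ n : ℤ, h θ - h 0 = n * (2 * π * Complex.I) := by
    intro θ
    have := (hhexp θ).trans (hhexp 0).symm
    obtain ⟨n, hn⟩ := Complex.exp_eq_exp_iff_exists_int.1 this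
    exact ⟨n, by rw [hn]; ring⟩
  have him : ∀ θ, ∃ n : ℤ, (h θ - h 0).im / (2 * π) = n := by
    intro θ
    obtain ⟨n, hn⟩ := hint θ
    refine ⟨n, ?_⟩
    rw [hn]
    have := Real.pi_pos
    simp
  choose n hn using him
  have hnc : Continuous n := by
    have : Continuous fun θ => ((n θ : ℤ) : ℝ) := by
      simp_rw [← hn]
      have := Complex.continuous_im.comp (hhc.sub (continuous_const (y := h 0)))
      exact this.div_const _
    exact Int.isClosedEmbedding_coe_real.isEmbedding.continuous_iff.2 this
  have hconst := PreconnectedSpace.constant inferInstance hnc (x := 2 * π) (y := 0)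
  have e1 := hn (2 * π)
  have e0 := hn 0
  rw [hconst, ← e0] at e1
  have hcc : c (2 * π) = c 0 := by
    simp only [c]
    congr 1
    push_cast
    rw [Complex.exp_two_pi_mul_I]; simp
  simp only [h, hcc] at e1
  have := Real.pi_pos
  simp at e1

/-! ### Flows and periodic extensions -/

/-- Global flow on `[0, T]` of a bounded, globally Lipschitz, time-dependent field, with continuous
dependence on the initial value. -/
lemma exists_flow_s1 {E : Type*} [NormedAddCommGroup E] [NormedSpace ℝ E] [CompleteSpace E]
    (v : ℝ → E → E) (K C : ℝ≥0) (hK : ∀ t, LipschitzWith K (v t))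
    (hc : ∀ x, Continuous fun t => v t x) (hC : ∀ t x, ‖v t x‖ ≤ C) (T : ℝ) (hT : 0 < T) :
    ∃ Φ : E → ℝ → E, (∀ x, Φ x 0 = x) ∧
      (∀ x, ∀ t ∈ Set.Icc 0 T, HasDerivWithinAt (Φ x) (v t (Φ x t)) (Set.Icc 0 T) t) ∧
      ∀ t ∈ Set.Icc 0 T, Continuous fun x => Φ x t := by
  have key : ∀ x, ∃ α : ℝ → E, α 0 = x ∧
      ∀ t ∈ Set.Icc 0 T, HasDerivWithinAt α (v t (α t)) (Set.Icc 0 T) t := by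
    intro x
    have hpl : IsPicardLindelof v (⟨0, Set.left_mem_Icc.2 hT.le⟩ : Set.Icc 0 T) x
        (C * T.toNNReal) 0 C K :=
      { lipschitzOnWith := fun t _ => (hK t).lipschitzOnWith
        continuousOn := fun x _ => (hc x).continuousOn
        norm_le := fun t _ x _ => hC t x
        mul_max_le := by simp [hT.le] }
    exact hpl.exists_eq_forall_mem_Icc_hasDerivWithinAt₀
  choose Φ h0 hd using key
  refine ⟨Φ, h0, hd, fun t ht => ?_⟩
  have hd' : ∀ x, ∀ t ∈ Set.Ico 0 T, HasDerivWithinAt (Φ x) (v t (Φ x t)) (Set.Ici t) t := by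
    intro x t ht
    exact (hd x t ⟨ht.1, ht.2.le⟩).mono_of_mem_nhdsWithin
      (Icc_mem_nhdsGE_of_mem ht)
  refine (LipschitzWith.of_dist_le_mul (K := Real.toNNReal (exp (K * (t - 0)))) ?_).continuous
  intro x y
  have := dist_le_of_trajectories_ODE hK (fun t ht => (hd x t ht).continuousWithinAt) (hd' x)
    (fun t ht => (hd y t ht).continuousWithinAt) (hd' y) le_rfl t ht
  rw [h0, h0] at this
  rw [Real.coe_toNNReal _ (exp_pos _).le, mul_comm]
  exact this

/-- A solution on `[0, T]` of a `T`-periodic equation with equal end values extends to a `T`-periodic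
solution on `ℝ`. -/
lemma exists_periodic_extension_s1 {E : Type*} [NormedAddCommGroup E] [NormedSpace ℝ E]
    [CompleteSpace E] (v : ℝ → E → E) (hv : Continuous (Function.uncurry v)) (T : ℝ) (hT : 0 < T)
    (hper : ∀ t x, v (t + T) x = v t x) (α : ℝ → E)
    (hα : ∀ t ∈ Set.Icc 0 T, HasDerivWithinAt α (v t (α t)) (Set.Icc 0 T) t) (h0 : α T = α 0) :
    ∃ u : ℝ → E, u 0 = α 0 ∧ (∀ t, u (t + T) = u t) ∧ ∀ t, HasDerivAt u (v t (u t)) t := by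
  have : Fact (0 < T) := ⟨hT⟩
  have hαc : ContinuousOn α (Set.Icc 0 T) := fun t ht => (hα t ht).continuousWithinAt
  -- `U` is the periodic extension of `α`, and `u` the primitive of the field along `U`. The two
  -- coincide, and differentiability of `u` across the multiples of `T` is then automatic.
  let U : ℝ → E := fun t => AddCircle.liftIco T 0 α (t : AddCircle T)
  have hUc : Continuous U :=
    (AddCircle.liftIco_zero_continuous h0.symm hαc).comp (AddCircle.continuous_mk' T)
  have hUp : ∀ t, U (t + T) = U t := fun t => by simp [U]
  have hUI : ∀ t ∈ Set.Ico 0 T, U t = α t := fun t ht => AddCircle.liftIco_zero_coe_apply ht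
  have hUT : ∀ t ∈ Set.Icc 0 T, U t = α t := by
    intro t ht
    rcases eq_or_lt_of_le ht.2 with rfl | h
    · have := hUp 0
      rw [zero_add] at this
      rw [this, hUI 0 ⟨le_rfl, hT⟩, h0]
    · exact hUI t ⟨ht.1, h⟩
  let w : ℝ → E := fun t => v t (U t)
  have hwc : Continuous w := hv.comp (continuous_id.prodMk hUc)
  have hwp : Function.Periodic w T := fun t => by simp only [w]; rw [hUp, hper]
  let u : ℝ → E := fun t => α 0 + ∫ s in (0 : ℝ)..t, w s
  have hud : ∀ t, HasDerivAt u (w t) t := fun t =>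
    (intervalIntegral.integral_hasDerivAt_right (hwc.intervalIntegrable _ _)
      (hwc.stronglyMeasurableAtFilter _ _) hwc.continuousAt).const_add _
  have huα : ∀ t ∈ Set.Icc 0 T, u t = α t := by
    intro t ht
    have hsub : Set.Icc 0 t ⊆ Set.Icc 0 T := Set.Icc_subset_Icc_right ht.2
    have := intervalIntegral.integral_eq_sub_of_hasDerivAt_of_le ht.1 (hαc.mono hsub)
      (f' := w) (fun s hs => by
        have hs' : s ∈ Set.Icc 0 T := hsub ⟨hs.1.le, hs.2.le⟩
        have h1 := (hα s hs').hasDerivAt (Icc_mem_nhds hs.1 (hs.2.trans_le ht.2))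
        simpa [w, hUT s hs'] using h1) (hwc.intervalIntegrable _ _)
    simp only [u]
    rw [this]; abel
  have hup : Function.Periodic u T := by
    intro t
    have h1 : (∫ s in (0 : ℝ)..(t + T), w s) = (∫ s in (0 : ℝ)..t, w s) + ∫ s in t..(t + T), w s :=
      (intervalIntegral.integral_add_adjacent_intervals (hwc.intervalIntegrable _ _)
        (hwc.intervalIntegrable _ _)).symm
    have h2 := hwp.intervalIntegral_add_eq t 0
    have h3 := huα T ⟨hT.le, le_rfl⟩
    simp only [u] at h3 ⊢
    rw [h1, h2, zero_add]
    have h4 : ∫ s in (0 : ℝ)..T, w s = 0 := by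
      rw [h0] at h3; simpa using h3
    rw [h4, add_zero]
  have huU : ∀ t, u t = U t := by
    intro t
    have hp : Function.Periodic (fun t => (u t, U t)) T := fun t => Prod.ext (hup t) (hUp t)
    obtain ⟨y, hy, hyt⟩ := hp.exists_mem_Ico₀ hT t
    rw [Prod.mk.injEq] at hyt
    rw [hyt.1, hyt.2, huα y ⟨hy.1, hy.2.le⟩, hUI y hy]
  refine ⟨u, by simp [u], hup, fun t => ?_⟩
  rw [huU]
  exact hud t

/-! ### Continuation of periodic solutions -/

/-- Continuation theorem for planar periodic equations with bounded Lipschitz right-hand side `f`.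
Hypothesis `h1` bounds, uniformly in `l ∈ (0, 1]`, the initial values of the periodic solutions of
`u' = l • f t u`. Hypothesis `h2` bounds the zeros along a segment joining the identity to the
averaged field, composed with the quarter turn `(v₁, v₂) ↦ (v₂, -v₁)`, and so plays the role of a
nonzero degree. -/
lemma exists_periodic_of_apriori (f : ℝ → ℝ × ℝ → ℝ × ℝ) (hf : Continuous (Function.uncurry f))
    (K C : ℝ≥0) (hK : ∀ t, LipschitzWith K (f t)) (hC : ∀ t x, ‖f t x‖ ≤ C)
    (T : ℝ) (hT : 0 < T) (hper : ∀ t x, f (t + T) x = f t x) (z₀ : ℝ × ℝ) (ρ : ℝ) (hρ : 0 < ρ)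
    (h1 : ∀ l ∈ Set.Ioc (0 : ℝ) 1, ∀ u : ℝ → ℝ × ℝ, (∀ t, u (t + T) = u t) →
      (∀ t, HasDerivAt u (l • f t (u t)) t) → ‖u 0 - z₀‖ < ρ)
    (h2 : ∀ μ ∈ Set.Icc (0 : ℝ) 1, ∀ z : ℝ × ℝ,
      (1 - μ) * z.1 + μ * (∫ t in (0 : ℝ)..T, f t (z₀ + z)).2 = 0 →
      (1 - μ) * z.2 - μ * (∫ t in (0 : ℝ)..T, f t (z₀ + z)).1 = 0 → ‖z‖ < ρ) :
    ∃ u : ℝ → ℝ × ℝ, (∀ t, u (t + T) = u t) ∧ ∀ t, HasDerivAt u (f t (u t)) t := by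
  let cl : ℝ → ℝ := fun x => max 0 (min 1 x)
  have hclL : LipschitzWith 1 cl := (LipschitzWith.id.const_min 1).const_max 0
  have hcl0 : ∀ x, 0 ≤ cl x := fun x => le_max_left _ _
  have hcl1 : ∀ x, cl x ≤ 1 := fun x => max_le zero_le_one (min_le_left _ _)
  have hclid : ∀ x ∈ Set.Icc (0 : ℝ) 1, cl x = x := fun x hx => by
    simp only [cl]; rw [min_eq_right hx.2, max_eq_right hx.1]
  -- The homotopy parameter is carried along as a constant state variable.
  let V : ℝ → ℝ × (ℝ × ℝ) → ℝ × (ℝ × ℝ) := fun t x => (0, cl x.1 • f t x.2)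
  have hVK : ∀ t, LipschitzWith (C + K) (V t) := by
    intro t
    refine LipschitzWith.of_dist_le_mul fun x y => ?_
    have e : dist (V t x) (V t y) = ‖cl x.1 • f t x.2 - cl y.1 • f t y.2‖ := by
      rw [Prod.dist_eq, ← dist_eq_norm]
      simp [V]
    have e2 : cl x.1 • f t x.2 - cl y.1 • f t y.2
        = (cl x.1 - cl y.1) • f t x.2 + cl y.1 • (f t x.2 - f t y.2) := by module
    have a1 : |cl x.1 - cl y.1| ≤ dist x y := by
      have := hclL.dist_le_mul x.1 y.1
      rw [NNReal.coe_one, one_mul, Real.dist_eq] at this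
      exact this.trans (by rw [Prod.dist_eq]; exact le_max_left _ _)
    have a2 : ‖f t x.2 - f t y.2‖ ≤ K * dist x y := by
      have := (hK t).dist_le_mul x.2 y.2
      rw [dist_eq_norm] at this
      exact this.trans (by gcongr; rw [Prod.dist_eq]; exact le_max_right _ _)
    rw [e, e2]
    refine (norm_add_le _ _).trans ?_
    rw [norm_smul, norm_smul, Real.norm_eq_abs, Real.norm_eq_abs, abs_of_nonneg (hcl0 y.1)]
    have b1 : |cl x.1 - cl y.1| * ‖f t x.2‖ ≤ dist x y * C :=
      mul_le_mul a1 (hC _ _) (norm_nonneg _) dist_nonneg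
    have b2 : cl y.1 * ‖f t x.2 - f t y.2‖ ≤ 1 * (K * dist x y) :=
      mul_le_mul (hcl1 _) a2 (norm_nonneg _) zero_le_one
    push_cast
    linarith
  have hVc : ∀ x, Continuous fun t => V t x := by
    intro x
    have : Continuous fun t => f t x.2 := hf.comp (continuous_id.prodMk continuous_const)
    exact continuous_const.prodMk (by fun_prop)
  have hVC : ∀ t x, ‖V t x‖ ≤ C := by
    intro t x
    have : ‖cl x.1 • f t x.2‖ ≤ C := by
      rw [norm_smul, Real.norm_eq_abs, abs_of_nonneg (hcl0 _)]
      calc cl x.1 * ‖f t x.2‖ ≤ 1 * C :=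
            mul_le_mul (hcl1 _) (hC _ _) (norm_nonneg _) zero_le_one
        _ = C := one_mul _
    rw [Prod.norm_def]
    simpa [V] using this
  obtain ⟨Φ, hΦ0, hΦd, hΦc⟩ := exists_flow_s1 V (C + K) C hVK hVc hVC T hT
  have hΦ1 : ∀ x, ∀ t ∈ Set.Icc 0 T, (Φ x t).1 = x.1 := by
    intro x t ht
    have := constant_of_has_deriv_right_zero (f := fun t => (Φ x t).1) (a := 0) (b := T)
      (fun t ht => (hΦd x t ht).continuousWithinAt.fst)
      (fun t ht => ((hΦd x t ⟨ht.1, ht.2.le⟩).mono_of_mem_nhdsWithin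
        (Icc_mem_nhdsGE_of_mem ht)).fst) t ht
    rw [this, hΦ0]
  have hΦ2 : ∀ l ∈ Set.Icc (0 : ℝ) 1, ∀ y, ∀ t ∈ Set.Icc 0 T,
      HasDerivWithinAt (fun t => (Φ (l, y) t).2) (l • f t (Φ (l, y) t).2) (Set.Icc 0 T) t := by
    intro l hl y t ht
    have := (hΦd (l, y) t ht).snd
    simp only [V] at this
    rwa [hΦ1 _ t ht, hclid l hl] at this
  -- For `l > 0` the zeros of `G (l, ·)` are the fixed points of the period map of `l • f`, while
  -- `G (0, ·)` is the integral of `f` over one period.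
  let G : ℝ × (ℝ × ℝ) → ℝ × ℝ := fun x => ∫ t in (0 : ℝ)..T, f t (Φ x t).2
  have hint : ∀ x, ContinuousOn (fun t => f t (Φ x t).2) (Set.Icc 0 T) := by
    intro x
    exact hf.comp_continuousOn
      (continuousOn_id.prodMk fun t ht => (hΦd x t ht).continuousWithinAt.snd)
  have hGc : Continuous G := by
    refine intervalIntegral.continuous_of_dominated_interval (bound := fun _ => (C : ℝ)) ?_ ?_ ?_ ?_
    · intro x
      rw [Set.uIoc_of_le hT.le]
      exact ((hint x).mono Set.Ioc_subset_Icc_self).aestronglyMeasurable measurableSet_Ioc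
    · exact fun x => Filter.Eventually.of_forall fun t _ => hC _ _
    · exact intervalIntegrable_const
    · refine Filter.Eventually.of_forall fun t ht => ?_
      rw [Set.uIoc_of_le hT.le] at ht
      exact hf.comp (continuous_const.prodMk (hΦc t ⟨ht.1.le, ht.2⟩).snd)
  have hΦT : ∀ l ∈ Set.Icc (0 : ℝ) 1, ∀ y, (Φ (l, y) T).2 - y = l • G (l, y) := by
    intro l hl y
    have hcont : ContinuousOn (fun t => l • f t (Φ (l, y) t).2) (Set.Icc 0 T) :=
      (hint (l, y)).const_smul l
    have := intervalIntegral.integral_eq_sub_of_hasDerivAt_of_le hT.le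
      (fun t ht => (hΦ2 l hl y t ht).continuousWithinAt)
      (fun t ht => (hΦ2 l hl y t ⟨ht.1.le, ht.2.le⟩).hasDerivAt (Icc_mem_nhds ht.1 ht.2))
      (by rw [← Set.uIcc_of_le hT.le] at hcont; exact hcont.intervalIntegrable)
    rw [hΦ0, intervalIntegral.integral_smul] at this
    exact this.symm
  have hG0 : ∀ y, G (0, y) = ∫ t in (0 : ℝ)..T, f t y := by
    intro y
    refine intervalIntegral.integral_congr fun t ht => ?_
    rw [Set.uIcc_of_le hT.le] at ht
    have := constant_of_has_deriv_right_zero (f := fun t => (Φ (0, y) t).2) (a := 0) (b := T)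
      (fun t ht => (hΦd _ t ht).continuousWithinAt.snd)
      (fun t ht => by
        have := (hΦ2 0 (by simp) y t ⟨ht.1, ht.2.le⟩).mono_of_mem_nhdsWithin
          (Icc_mem_nhdsGE_of_mem ht)
        simpa using this) t ht
    rw [this, hΦ0]
  have hsol : ∀ l ∈ Set.Icc (0 : ℝ) 1, ∀ y, G (l, y) = 0 → ∃ u : ℝ → ℝ × ℝ, u 0 = y ∧
      (∀ t, u (t + T) = u t) ∧ ∀ t, HasDerivAt u (l • f t (u t)) t := by
    intro l hl y hG
    have hT' := hΦT l hl y
    rw [hG, smul_zero, sub_eq_zero] at hT'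
    obtain ⟨u, hu0, hup, hud⟩ := exists_periodic_extension_s1 (fun t x => l • f t x)
      (by exact hf.const_smul l) T hT (fun t x => by rw [hper]) (fun t => (Φ (l, y) t).2)
      (hΦ2 l hl y) (by rw [hT', hΦ0])
    exact ⟨u, by rw [hu0, hΦ0], hup, hud⟩
  -- The first half of the homotopy joins the identity to the (turned) averaged field; the second
  -- half runs `l` from `0` to `1`.
  let H : ℝ × ℂ → ℝ × ℝ := fun x => G (cl (2 * x.1 - 1), z₀ + (x.2.re, x.2.im))
  have hcl : Continuous cl := hclL.continuous
  have hHc : Continuous H := hGc.comp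
    ((hcl.comp (by fun_prop)).prodMk (continuous_const.add
      ((Complex.continuous_re.comp continuous_snd).prodMk
        (Complex.continuous_im.comp continuous_snd))))
  let F : ℝ × ℂ → ℂ := fun x => (1 - (cl (2 * x.1) : ℂ)) * x.2
    + (cl (2 * x.1) : ℂ) * ((H x).2 - (H x).1 * Complex.I)
  have hFc : Continuous F := by
    have : Continuous fun x : ℝ × ℂ => cl (2 * x.1) := hcl.comp (by fun_prop)
    fun_prop
  have hzero : ∀ x, F x = 0 → (1 - cl (2 * x.1)) * x.2.re + cl (2 * x.1) * (H x).2 = 0 ∧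
      (1 - cl (2 * x.1)) * x.2.im - cl (2 * x.1) * (H x).1 = 0 := by
    intro x hx
    have hre := congrArg Complex.re hx
    have him := congrArg Complex.im hx
    simp [F] at hre him
    exact ⟨hre, by linarith⟩
  have hlate : ∀ σ ∈ Set.Icc (0 : ℝ) 1, 1 / 2 < σ → ∀ w, F (σ, w) = 0 →
      G (2 * σ - 1, z₀ + (w.re, w.im)) = 0 := by
    intro σ hσ h w hw
    obtain ⟨e1, e2⟩ := hzero _ hw
    have c1 : cl (2 * σ) = 1 := by
      simp only [cl]; rw [min_eq_left (by linarith), max_eq_right zero_le_one]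
    simp only [c1, H, hclid (2 * σ - 1) ⟨by linarith, by linarith [hσ.2]⟩] at e1 e2
    exact Prod.ext (by simp; linarith) (by simp; linarith)
  obtain ⟨w, hw⟩ := exists_zero_of_homotopy F hFc (fun z => by simp [F, cl]) (2 * ρ) (by positivity)
    (by
      intro σ hσ w hw
      have hn : ‖((w.re, w.im) : ℝ × ℝ)‖ < ρ := by
        rcases le_or_gt σ (1 / 2) with h | h
        · obtain ⟨e1, e2⟩ := hzero _ hw
          have c0 : cl (2 * σ - 1) = 0 := by
            simp only [cl]; rw [min_eq_right (by linarith), max_eq_left (by linarith)]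
          simp only [H, c0, hG0] at e1 e2
          exact h2 (cl (2 * σ)) ⟨hcl0 _, hcl1 _⟩ (w.re, w.im) e1 e2
        · obtain ⟨u, hu0, hup, hud⟩ := hsol (2 * σ - 1) ⟨by linarith, by linarith [hσ.2]⟩ _
            (hlate σ hσ h w hw)
          have := h1 (2 * σ - 1) ⟨by linarith, by linarith [hσ.2]⟩ u hup hud
          rwa [hu0, add_sub_cancel_left] at this
      rw [Prod.norm_def, max_lt_iff] at hn
      have := Complex.norm_le_abs_re_add_abs_im w
      simp only [Real.norm_eq_abs] at hn
      linarith [hn.1, hn.2])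
  obtain ⟨u, -, hup, hud⟩ := hsol 1 (by simp) (z₀ + (w.re, w.im))
    (by simpa [show (2 : ℝ) - 1 = 1 by norm_num] using hlate 1 (by simp) (by norm_num) w hw)
  exact ⟨u, hup, fun t => by simpa using hud t⟩

/-! ### Truncated exponential and a priori bounds -/

/-- The exponential truncated from above at `B`; it is bounded and globally Lipschitz. -/
noncomputable def capExp (B x : ℝ) : ℝ := min (exp x) B

lemma capExp_pos {B : ℝ} (hB : 0 < B) (x : ℝ) : 0 < capExp B x := lt_min (exp_pos x) hB

lemma capExp_eq_of_lt {B x : ℝ} (h : capExp B x < B) : capExp B x = exp x := by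
  unfold capExp at *
  rcases min_lt_iff.1 h with h | h
  · exact min_eq_left h.le
  · exact absurd h (lt_irrefl _)

lemma capExp_mono (B : ℝ) : Monotone (capExp B) := fun _ _ h =>
  min_le_min_right _ (exp_le_exp.2 h)

lemma capExp_sub_le {B : ℝ} (hB : 0 < B) {x y : ℝ} (hxy : x ≤ y) :
    capExp B y - capExp B x ≤ B * (y - x) := by
  have hyB : capExp B y ≤ B := min_le_right _ _
  have hpos := capExp_pos hB y
  rcases le_or_gt B (exp x) with h | h
  · have : capExp B x = B := min_eq_right h
    rw [this]
    nlinarith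
  · have hx : capExp B x = exp x := min_eq_left h.le
    have hye : capExp B y ≤ exp y := min_le_left _ _
    have h1 : 1 - (y - x) ≤ exp (x - y) := by linarith [add_one_le_exp (x - y)]
    have h2 : exp x = exp y * exp (x - y) := by rw [← exp_add]; congr 1; ring
    have h3 : capExp B y * exp (x - y) ≤ exp x := by
      rw [h2]; exact mul_le_mul_of_nonneg_right hye (exp_pos _).le
    have h4 : capExp B y * (1 - (y - x)) ≤ capExp B y * exp (x - y) :=
      mul_le_mul_of_nonneg_left h1 hpos.le
    rw [hx]
    nlinarith

lemma abs_capExp_sub_le {B : ℝ} (hB : 0 < B) (x y : ℝ) :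
    |capExp B x - capExp B y| ≤ B * |x - y| := by
  rcases le_total x y with h | h
  · rw [abs_sub_comm, abs_of_nonneg (sub_nonneg.2 (capExp_mono B h)), abs_sub_comm x,
      abs_of_nonneg (sub_nonneg.2 h)]
    exact capExp_sub_le hB h
  · rw [abs_of_nonneg (sub_nonneg.2 (capExp_mono B h)), abs_of_nonneg (sub_nonneg.2 h)]
    exact capExp_sub_le hB h

/-- The one-sided estimate along a period: a function of period `T` whose derivative is at most `r`
never exceeds any of its values by more than `r * T`. -/
lemma le_add_of_deriv_le {g g' : ℝ → ℝ} {T r : ℝ} (hT : 0 < T) (hr : 0 ≤ r)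
    (hp : Function.Periodic g T) (hd : ∀ t, HasDerivAt g (g' t) t) (hg : ∀ t, g' t ≤ r)
    (t t' : ℝ) : g t ≤ g t' + r * T := by
  obtain ⟨y, hy, hyt⟩ := hp.exists_mem_Ico hT t t'
  have := image_sub_le_mul_sub_of_deriv_le (f := g) (C := r)
    (fun t => (hd t).differentiableAt) (fun t => by rw [(hd t).deriv]; exact hg t) hy.1
  rw [hyt]
  have h2 : r * (y - t') ≤ r * T := mul_le_mul_of_nonneg_left (by linarith [hy.2]) hr
  linarith

lemma exists_isMax_of_periodic {g : ℝ → ℝ} {T : ℝ} (hT : 0 < T) (hp : Function.Periodic g T)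
    (hg : Continuous g) : ∃ t₀, ∀ t, g t ≤ g t₀ := by
  obtain ⟨t₀, -, h⟩ := isCompact_Icc.exists_isMaxOn (Set.nonempty_Icc.2 hT.le)
    (hg.continuousOn (s := Set.Icc 0 T))
  refine ⟨t₀, fun t => ?_⟩
  obtain ⟨y, hy, hyt⟩ := hp.exists_mem_Ico₀ hT t
  rw [hyt]
  exact h ⟨hy.1, hy.2.le⟩

/-- A priori bounds for periodic solutions of the truncated system in logarithmic coordinates, with
the field multiplied by `l ∈ (0, 1]`. Here `xs` is the prey level at which the predator equation
balances. Periodicity of `u₂` puts the minimum of the prey below `xs` and the maximum above it, and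
the first equation at the two extrema bounds the maximal prey and the predator level at the time of
minimal prey. The bounds do not depend on `l`, and the upper
ones lie below the truncation levels. -/
lemma apriori_bounds_s1 {a b c d e k m S T xs B₁ B₂ l : ℝ} (ha : 0 < a) (hb : 0 < b) (hc : 0 < c)
    (he : 0 < e) (hk : 0 < k) (hde : e < d) (hT : 0 < T) (hxs : (d - e) * xs = k * e)
    (hthr : b * xs < a * m) (hl : l ∈ Set.Ioc (0 : ℝ) 1)
    {s : ℝ → ℝ} (hsm : ∀ t, m ≤ s t) (hsS : ∀ t, s t ≤ S)
    (hB₁ : a * S / b < B₁)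
    (hB₂ : (k + xs) * (a * S) / c * exp ((d * (a * S / b) / (k + a * S / b) - e) * T) < B₂)
    {u₁ u₂ : ℝ → ℝ} (hp₁ : Function.Periodic u₁ T) (hp₂ : Function.Periodic u₂ T)
    (hd₁ : ∀ t, HasDerivAt u₁ (l * (a * s t - b * capExp B₁ (u₁ t)
      - c * capExp B₂ (u₂ t) / (k + capExp B₁ (u₁ t)))) t)
    (hd₂ : ∀ t, HasDerivAt u₂ (l * (d * capExp B₁ (u₁ t) / (k + capExp B₁ (u₁ t)) - e)) t)
    (t : ℝ) :
    exp (u₁ t) ≤ a * S / b ∧ xs * exp (-(a * S * T)) ≤ exp (u₁ t) ∧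
    exp (u₂ t) ≤ (k + xs) * (a * S) / c * exp ((d * (a * S / b) / (k + a * S / b) - e) * T) ∧
    k * (a * m - b * xs) / c * exp (-(e * T)) ≤ exp (u₂ t) := by
  have hxs0 : 0 < xs := by
    have : 0 < (d - e) * xs := by rw [hxs]; positivity
    exact (mul_pos_iff_of_pos_left (by linarith)).1 this
  have hd0 : 0 < d := he.trans hde
  have hmS : m ≤ S := (hsm 0).trans (hsS 0)
  have haS : b * xs < a * S := hthr.trans_le (mul_le_mul_of_nonneg_left hmS ha.le)
  have haS0 : 0 < a * S := lt_trans (by positivity) haS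
  set X := a * S / b with hX
  have hX0 : 0 < X := by positivity
  have hbX : b * X = a * S := by rw [hX]; field_simp
  have hxsX : xs < X := by rw [hX, lt_div_iff₀ hb]; linarith
  have hB₁0 : 0 < B₁ := hX0.trans hB₁
  set r := d * X / (k + X) - e with hr
  have hr0 : 0 ≤ r := by
    rw [hr, sub_nonneg, le_div_iff₀ (by linarith)]
    nlinarith
  have hY0 : 0 < (k + xs) * (a * S) / c := by positivity
  have hY : (k + xs) * (a * S) / c < B₂ := by
    refine lt_of_le_of_lt (le_mul_of_one_le_right hY0.le ?_) hB₂
    exact one_le_exp (by positivity)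
  have hB₂0 : 0 < B₂ := hY0.trans hY
  have hψ₁ : ∀ t, 0 < capExp B₁ (u₁ t) := fun t => capExp_pos hB₁0 _
  have hψ₂ : ∀ t, 0 < capExp B₂ (u₂ t) := fun t => capExp_pos hB₂0 _
  have hl0 := hl.1
  -- At an extremum of `u₁` the first equation is an algebraic identity.
  have hcrit : ∀ τ, IsLocalExtr u₁ τ → a * s τ - b * capExp B₁ (u₁ τ)
      = c * capExp B₂ (u₂ τ) / (k + capExp B₁ (u₁ τ)) := by
    intro τ hτ
    have := hτ.hasDerivAt_eq_zero (hd₁ τ)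
    have := (mul_eq_zero.1 this).resolve_left hl0.ne'
    linarith
  have hc₁ : Continuous u₁ := continuous_iff_continuousAt.2 fun t => (hd₁ t).continuousAt
  have hp₂' : u₂ T = u₂ 0 := by simpa using hp₂ 0
  obtain ⟨t₂, ht₂⟩ := exists_isMax_of_periodic hT hp₁ hc₁
  obtain ⟨t₁, ht₁⟩ := exists_isMax_of_periodic hT (g := fun t => -u₁ t)
    (fun t => by simp [hp₁ t]) hc₁.neg
  replace ht₁ : ∀ t, u₁ t₁ ≤ u₁ t := fun t => neg_le_neg_iff.1 (ht₁ t)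
  have hmax := hcrit t₂ (Or.inr (Filter.Eventually.of_forall ht₂))
  have hmin := hcrit t₁ (Or.inl (Filter.Eventually.of_forall ht₁))
  -- Upper bound for the prey.
  have hX₂ : capExp B₁ (u₁ t₂) ≤ X := by
    have h1 : 0 < c * capExp B₂ (u₂ t₂) / (k + capExp B₁ (u₁ t₂)) := by
      have := hψ₁ t₂; have := hψ₂ t₂; positivity
    have h2 : a * s t₂ ≤ a * S := mul_le_mul_of_nonneg_left (hsS _) ha.le
    refine le_of_mul_le_mul_left ?_ hb
    linarith
  have hcap₁ : ∀ t, capExp B₁ (u₁ t) = exp (u₁ t) := fun t =>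
    capExp_eq_of_lt (((capExp_mono B₁ (ht₂ t)).trans hX₂).trans_lt hB₁)
  have hle₁ : ∀ t, exp (u₁ t) ≤ X := fun t => by
    rw [← hcap₁]; exact (capExp_mono B₁ (ht₂ t)).trans hX₂
  -- The predator equation forces the prey to cross the level `xs`.
  have hsign : ∀ t, (k + exp (u₁ t)) * (d * exp (u₁ t) / (k + exp (u₁ t)) - e)
      = (d - e) * (exp (u₁ t) - xs) := by
    intro t
    have : k + exp (u₁ t) ≠ 0 := by positivity
    rw [mul_sub, mul_sub, hxs, mul_div_cancel₀ _ this]; ring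
  have hlow : exp (u₁ t₁) ≤ xs := by
    by_contra! h
    have hmono : StrictMono u₂ := strictMono_of_hasDerivAt_pos hd₂ fun t => by
      rw [hcap₁]
      refine mul_pos hl0 ?_
      have h1 : xs < exp (u₁ t) := h.trans_le (exp_le_exp.2 (ht₁ t))
      have h2 : 0 < (d - e) * (exp (u₁ t) - xs) := mul_pos (by linarith) (by linarith)
      rw [← hsign] at h2
      exact (mul_pos_iff_of_pos_left (by positivity)).1 h2
    exact (hmono hT).ne' hp₂'
  have hhigh : xs ≤ exp (u₁ t₂) := by
    by_contra! h
    have hmono : StrictAnti u₂ := strictAnti_of_hasDerivAt_neg hd₂ fun t => by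
      rw [hcap₁]
      refine mul_neg_of_pos_of_neg hl0 ?_
      have h1 : exp (u₁ t) < xs := (exp_le_exp.2 (ht₂ t)).trans_lt h
      have h2 : 0 < (d - e) * (xs - exp (u₁ t)) := mul_pos (by linarith) (by linarith)
      have h3 := hsign t
      have h4 : 0 < k + exp (u₁ t) := by positivity
      by_contra! h5
      nlinarith [mul_nonneg h4.le h5]
    exact (hmono hT).ne hp₂'
  -- Predator level at the time of minimal prey.
  rw [hcap₁, eq_div_iff (by positivity)] at hmin
  have hx₁ := exp_pos (u₁ t₁)
  have hs₁ : a * s t₁ ≤ a * S := mul_le_mul_of_nonneg_left (hsS _) ha.le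
  have hs₁' : a * m ≤ a * s t₁ := mul_le_mul_of_nonneg_left (hsm _) ha.le
  have hup₂ : capExp B₂ (u₂ t₁) ≤ (k + xs) * (a * S) / c := by
    rw [le_div_iff₀ hc, mul_comm, ← hmin]
    have h1 : a * s t₁ - b * exp (u₁ t₁) ≤ a * S := by linarith [mul_pos hb hx₁]
    rw [mul_comm (k + xs)]
    exact mul_le_mul h1 (by linarith) (by positivity) haS0.le
  have hcap₂ : capExp B₂ (u₂ t₁) = exp (u₂ t₁) := capExp_eq_of_lt (hup₂.trans_lt hY)
  rw [hcap₂] at hup₂ hmin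
  have hlo₂ : k * (a * m - b * xs) / c ≤ exp (u₂ t₁) := by
    rw [div_le_iff₀ hc, mul_comm (exp _), ← hmin]
    have h1 : a * m - b * xs ≤ a * s t₁ - b * exp (u₁ t₁) := by
      linarith [mul_le_mul_of_nonneg_left hlow hb.le]
    rw [mul_comm k]
    exact mul_le_mul h1 (by linarith) hk.le (by linarith)
  refine ⟨hle₁ t, ?_, ?_, ?_⟩
  · have h := le_add_of_deriv_le hT haS0.le hp₁ hd₁ (fun t => by
      have h1 : 0 < c * capExp B₂ (u₂ t) / (k + capExp B₁ (u₁ t)) := by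
        have := hψ₁ t; have := hψ₂ t; positivity
      have h2 : a * s t ≤ a * S := mul_le_mul_of_nonneg_left (hsS _) ha.le
      have h3 : 0 < b * capExp B₁ (u₁ t) := mul_pos hb (hψ₁ t)
      calc _ ≤ l * (a * S) := mul_le_mul_of_nonneg_left (by linarith) hl0.le
        _ ≤ 1 * (a * S) := mul_le_mul_of_nonneg_right hl.2 haS0.le
        _ = a * S := one_mul _) t₂ t
    calc xs * exp (-(a * S * T)) ≤ exp (u₁ t₂) * exp (-(a * S * T)) := by gcongr
      _ = exp (u₁ t₂ - a * S * T) := by rw [← exp_add]; rfl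
      _ ≤ exp (u₁ t) := exp_le_exp.2 (by linarith)
  · have h := le_add_of_deriv_le hT hr0 hp₂ hd₂ (fun t => by
      rw [hcap₁]
      have h1 : d * exp (u₁ t) / (k + exp (u₁ t)) ≤ d * X / (k + X) := by
        rw [div_le_div_iff₀ (by positivity) (by positivity)]
        have := mul_le_mul_of_nonneg_left (hle₁ t) (mul_pos hd0 hk).le
        linarith
      calc _ ≤ l * r := mul_le_mul_of_nonneg_left (by linarith) hl0.le
        _ ≤ 1 * r := mul_le_mul_of_nonneg_right hl.2 hr0
        _ = r := one_mul _) t t₁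
    calc exp (u₂ t) ≤ exp (u₂ t₁ + r * T) := exp_le_exp.2 h
      _ = exp (u₂ t₁) * exp (r * T) := exp_add _ _
      _ ≤ _ := by gcongr
  · have h := le_add_of_deriv_le (g := fun t => -u₂ t) hT he.le (fun t => by simp [hp₂ t])
      (fun t => (hd₂ t).neg) (fun t => by
        have h1 : 0 < d * capExp B₁ (u₁ t) / (k + capExp B₁ (u₁ t)) := by
          have := hψ₁ t; positivity
        have h2 : l * (d * capExp B₁ (u₁ t) / (k + capExp B₁ (u₁ t)) - e) ≥ l * (-e) :=
          mul_le_mul_of_nonneg_left (by linarith) hl0.le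
        have h3 : l * e ≤ 1 * e := mul_le_mul_of_nonneg_right hl.2 he.le
        linarith) t t₁
    calc _ ≤ exp (u₂ t₁) * exp (-(e * T)) := by gcongr
      _ = exp (u₂ t₁ - e * T) := by rw [← exp_add]; rfl
      _ ≤ exp (u₂ t) := exp_le_exp.2 (by linarith)

/-! ### Periodic solutions of the predator-prey system -/

lemma continuous_capExp (B : ℝ) : Continuous (capExp B) := continuous_exp.min continuous_const

lemma abs_div_sub_div_le {k B p p' q q' : ℝ} (hk : 0 < k) (hp : 0 < p) (hp' : 0 < p')
    (hq' : 0 < q') (hqB : q' ≤ B) :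
    |q / (k + p) - q' / (k + p')| ≤ |q - q'| / k + B * |p - p'| / k ^ 2 := by
  have hkp : 0 < k + p := by linarith
  have hkp' : 0 < k + p' := by linarith
  have e : q / (k + p) - q' / (k + p')
      = (q - q') / (k + p) + q' * (p' - p) / ((k + p) * (k + p')) := by
    field_simp; ring
  rw [e]
  refine (abs_add_le _ _).trans (add_le_add ?_ ?_)
  · rw [abs_div, abs_of_pos hkp]
    exact div_le_div_of_nonneg_left (abs_nonneg _) hk (by linarith)
  · rw [abs_div, abs_mul, abs_of_pos hq', abs_of_pos (mul_pos hkp hkp'), abs_sub_comm p']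
    refine div_le_div₀ (by have := hq'.le.trans hqB; positivity)
      (mul_le_mul_of_nonneg_right hqB (abs_nonneg _)) (by positivity) ?_
    rw [sq]
    exact mul_le_mul (by linarith) (by linarith) hk.le hkp.le

/-- The predator-prey field in logarithmic coordinates `u = (log x₁, log x₂)`, with both exponentials
truncated, at levels `B₁` and `B₂`. -/
noncomputable def capField (a b c d e k B₁ B₂ : ℝ) (s : ℝ → ℝ) (t : ℝ) (u : ℝ × ℝ) : ℝ × ℝ :=
  (a * s t - b * capExp B₁ u.1 - c * capExp B₂ u.2 / (k + capExp B₁ u.1),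
    d * capExp B₁ u.1 / (k + capExp B₁ u.1) - e)

lemma lipschitzWith_capField {a b c d e k B₁ B₂ : ℝ} (hb : 0 < b) (hc : 0 < c) (hd : 0 < d)
    (hk : 0 < k) (hB₁ : 0 < B₁) (hB₂ : 0 < B₂) (s : ℝ → ℝ) (t : ℝ) :
    LipschitzWith (Real.toNNReal (b * B₁ + c * (B₂ / k + B₂ * B₁ / k ^ 2)
      + d * (B₁ / k + B₁ * B₁ / k ^ 2))) (capField a b c d e k B₁ B₂ s t) := by
  refine LipschitzWith.of_dist_le_mul fun u v => ?_
  rw [Real.coe_toNNReal _ (by positivity)]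
  have hn : 0 ≤ dist u v := dist_nonneg
  have e₁ : |capExp B₁ u.1 - capExp B₁ v.1| ≤ B₁ * dist u v := by
    refine (abs_capExp_sub_le hB₁ _ _).trans (mul_le_mul_of_nonneg_left ?_ hB₁.le)
    rw [Prod.dist_eq, ← Real.dist_eq]; exact le_max_left _ _
  have e₂ : |capExp B₂ u.2 - capExp B₂ v.2| ≤ B₂ * dist u v := by
    refine (abs_capExp_sub_le hB₂ _ _).trans (mul_le_mul_of_nonneg_left ?_ hB₂.le)
    rw [Prod.dist_eq, ← Real.dist_eq]; exact le_max_right _ _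
  have g₁ := abs_div_sub_div_le (q := capExp B₂ u.2) hk (capExp_pos hB₁ u.1) (capExp_pos hB₁ v.1)
    (capExp_pos hB₂ v.2) (min_le_right _ _)
  have g₂ := abs_div_sub_div_le (q := capExp B₁ u.1) hk (capExp_pos hB₁ u.1) (capExp_pos hB₁ v.1)
    (capExp_pos hB₁ v.1) (min_le_right _ _)
  replace g₁ : _ ≤ B₂ * dist u v / k + B₂ * (B₁ * dist u v) / k ^ 2 := g₁.trans (by gcongr)
  replace g₂ : _ ≤ B₁ * dist u v / k + B₁ * (B₁ * dist u v) / k ^ 2 := g₂.trans (by gcongr)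
  have t₁ : 0 ≤ b * B₁ * dist u v := by positivity
  have t₂ : 0 ≤ c * (B₂ / k + B₂ * B₁ / k ^ 2) * dist u v := by positivity
  have t₃ : 0 ≤ d * (B₁ / k + B₁ * B₁ / k ^ 2) * dist u v := by positivity
  rw [Prod.dist_eq, max_le_iff, Real.dist_eq, Real.dist_eq]
  constructor
  · have : (capField a b c d e k B₁ B₂ s t u).1 - (capField a b c d e k B₁ B₂ s t v).1
        = -(b * (capExp B₁ u.1 - capExp B₁ v.1)) + -(c * (capExp B₂ u.2 / (k + capExp B₁ u.1)
          - capExp B₂ v.2 / (k + capExp B₁ v.1))) := by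
      simp only [capField]; ring
    rw [this]
    refine (abs_add_le _ _).trans ?_
    rw [abs_neg, abs_neg, abs_mul, abs_mul, abs_of_pos hb, abs_of_pos hc]
    have h1 := mul_le_mul_of_nonneg_left e₁ hb.le
    have h2 := mul_le_mul_of_nonneg_left g₁ hc.le
    calc _ ≤ _ := add_le_add h1 h2
      _ = b * B₁ * dist u v + c * (B₂ / k + B₂ * B₁ / k ^ 2) * dist u v := by ring
      _ ≤ _ := by linarith
  · have : (capField a b c d e k B₁ B₂ s t u).2 - (capField a b c d e k B₁ B₂ s t v).2
        = d * (capExp B₁ u.1 / (k + capExp B₁ u.1) - capExp B₁ v.1 / (k + capExp B₁ v.1)) := by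
      simp only [capField]; ring
    rw [this, abs_mul, abs_of_pos hd]
    calc _ ≤ _ := mul_le_mul_of_nonneg_left g₂ hd.le
      _ = d * (B₁ / k + B₁ * B₁ / k ^ 2) * dist u v := by ring
      _ ≤ _ := by linarith

lemma norm_capField_le {a b c d e k B₁ B₂ S : ℝ} (ha : 0 < a) (hb : 0 < b) (hc : 0 < c)
    (hd : 0 < d) (he : 0 < e) (hk : 0 < k) (hB₁ : 0 < B₁) (hB₂ : 0 < B₂) {s : ℝ → ℝ}
    (hs : ∀ t, |s t| ≤ S) (t : ℝ) (u : ℝ × ℝ) :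
    ‖capField a b c d e k B₁ B₂ s t u‖ ≤ Real.toNNReal (a * S + b * B₁ + c * B₂ / k + d + e) := by
  have hS : 0 ≤ S := (abs_nonneg _).trans (hs 0)
  rw [Real.coe_toNNReal _ (by positivity), Prod.norm_def, max_le_iff, Real.norm_eq_abs,
    Real.norm_eq_abs, abs_le, abs_le]
  have p₁ := capExp_pos hB₁ u.1
  have p₂ := capExp_pos hB₂ u.2
  have q₁ : capExp B₁ u.1 ≤ B₁ := min_le_right _ _
  have q₂ : capExp B₂ u.2 ≤ B₂ := min_le_right _ _
  have h1 : b * capExp B₁ u.1 ≤ b * B₁ := mul_le_mul_of_nonneg_left q₁ hb.le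
  have h1' : 0 < b * capExp B₁ u.1 := mul_pos hb p₁
  have h2 : c * capExp B₂ u.2 / (k + capExp B₁ u.1) ≤ c * B₂ / k :=
    div_le_div₀ (by positivity) (mul_le_mul_of_nonneg_left q₂ hc.le) hk (by linarith)
  have h2' : 0 < c * capExp B₂ u.2 / (k + capExp B₁ u.1) := by positivity
  have h3 : d * capExp B₁ u.1 / (k + capExp B₁ u.1) ≤ d := by
    rw [div_le_iff₀ (by positivity)]
    nlinarith
  have h3' : 0 < d * capExp B₁ u.1 / (k + capExp B₁ u.1) := by positivity
  have h4 := mul_le_mul_of_nonneg_left (abs_le.1 (hs t)).1 ha.le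
  have h5 := mul_le_mul_of_nonneg_left (abs_le.1 (hs t)).2 ha.le
  have h6 : 0 < b * B₁ := by positivity
  have h7 : 0 < c * B₂ / k := by positivity
  have h8 : 0 ≤ a * S := by positivity
  simp only [capField]
  refine ⟨⟨?_, ?_⟩, ?_, ?_⟩ <;> linarith

lemma continuous_capField {a b c d e k B₁ B₂ : ℝ} (hk : 0 < k) (hB₁ : 0 < B₁)
    {s : ℝ → ℝ} (hs : Continuous s) :
    Continuous (Function.uncurry (capField a b c d e k B₁ B₂ s)) := by
  have c₁ : Continuous fun x : ℝ × (ℝ × ℝ) => capExp B₁ x.2.1 :=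
    (continuous_capExp B₁).comp (by fun_prop)
  have c₂ : Continuous fun x : ℝ × (ℝ × ℝ) => capExp B₂ x.2.2 :=
    (continuous_capExp B₂).comp (by fun_prop)
  have hne : ∀ x : ℝ × (ℝ × ℝ), k + capExp B₁ x.2.1 ≠ 0 := fun x => by
    have := capExp_pos hB₁ x.2.1; positivity
  simp only [Function.uncurry_def, capField]
  fun_prop (disch := exact hne)

/-- Bounds for the zeros along the segment from the identity to the time-averaged truncated field,
turned by a quarter turn.
Coordinates are centred at `log xs` in the first variable; the second component of the field
vanishes only at `p = 0`, and then the first one is negative for large `q` and positive for very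
negative `q`. -/
lemma eq_zero_and_bounds_of_averaged {a b c d e k m S T xs H₁ H₂ L₂ μ p q : ℝ} (ha : 0 < a)
    (hb : 0 < b) (hc : 0 < c) (hd0 : 0 < d) (hk : 0 < k) (hT : 0 < T) (hxs0 : 0 < xs)
    (hxs : (d - e) * xs = k * e) (hthr : b * xs < a * m) {s : ℝ → ℝ} (hs : Continuous s)
    (hsm : ∀ t, m ≤ s t) (hsS : ∀ t, s t ≤ S) (hxsH : xs < H₁)
    (hY : (k + xs) * (a * S) / c ≤ H₂) (hH₂0 : 0 < H₂) (hL₂0 : 0 < L₂)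
    (hL₂' : L₂ ≤ k * (a * m - b * xs) / c) (hμ : μ ∈ Set.Icc (0 : ℝ) 1)
    (h1 : (1 - μ) * p + μ * (T * (d * capExp (H₁ + 1) (log xs + p) /
      (k + capExp (H₁ + 1) (log xs + p)) - e)) = 0)
    (h2 : (1 - μ) * q - μ * (∫ t in (0 : ℝ)..T, (a * s t - b * capExp (H₁ + 1) (log xs + p)
      - c * capExp (H₂ + 1) q / (k + capExp (H₁ + 1) (log xs + p)))) = 0) :
    p = 0 ∧ -|log L₂| ≤ q ∧ q ≤ |log H₂| := by
  have hde : 0 < d - e := by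
    by_contra! h
    have := mul_nonneg (neg_nonneg.2 h) hxs0.le
    have : 0 < k * d := mul_pos hk hd0
    nlinarith
  have hB₁0 : 0 < H₁ + 1 := by linarith
  have hsub : 0 < a * m - b * xs := by linarith
  have hψ := capExp_pos hB₁0 (log xs + p)
  -- A convex combination of two numbers of the same sign does not vanish.
  have comb : ∀ x y : ℝ, 0 < x → 0 < y → 0 < (1 - μ) * x + μ * y := by
    intro x y hx hy
    rcases eq_or_lt_of_le hμ.1 with h | h
    · rw [← h]; linarith
    · have := mul_pos h hy
      have := mul_nonneg (sub_nonneg.2 hμ.2) hx.le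
      linarith
  have hp : p = 0 := by
    rcases lt_trichotomy p 0 with h | h | h
    · exfalso
      have hlt : capExp (H₁ + 1) (log xs + p) < xs := by
        refine (min_le_left _ _).trans_lt ?_
        rw [← lt_log_iff_exp_lt hxs0]; linarith
      have : d * capExp (H₁ + 1) (log xs + p) / (k + capExp (H₁ + 1) (log xs + p)) < e := by
        rw [div_lt_iff₀ (by positivity)]
        nlinarith
      have := comb (-p) (-(T * (d * capExp (H₁ + 1) (log xs + p) /
        (k + capExp (H₁ + 1) (log xs + p)) - e))) (by linarith) (by nlinarith)
      linarith
    · exact h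
    · exfalso
      have hlt : xs < capExp (H₁ + 1) (log xs + p) := by
        refine lt_min ?_ (by linarith)
        rw [← log_lt_iff_lt_exp hxs0]; linarith
      have : e < d * capExp (H₁ + 1) (log xs + p) / (k + capExp (H₁ + 1) (log xs + p)) := by
        rw [lt_div_iff₀ (by positivity)]
        nlinarith
      have := comb p (T * (d * capExp (H₁ + 1) (log xs + p) /
        (k + capExp (H₁ + 1) (log xs + p)) - e)) h (mul_pos hT (by linarith))
      linarith
  subst hp
  have hcap : capExp (H₁ + 1) (log xs) = xs := by
    rw [capExp, exp_log hxs0]; exact min_eq_left (by linarith)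
  simp only [add_zero, hcap] at h2
  have hcont : Continuous fun t => a * s t - b * xs - c * capExp (H₂ + 1) q / (k + xs) := by
    fun_prop
  have hkx : 0 < k + xs := by linarith
  have hq₁ : q ≤ |log H₂| := by
    by_contra! h
    have hq0 : 0 < q := (abs_nonneg _).trans_lt h
    have hlt : (k + xs) * (a * S) / c < capExp (H₂ + 1) q := by
      refine lt_min (hY.trans_lt ?_) (by linarith)
      rw [← log_lt_iff_lt_exp hH₂0]; linarith [le_abs_self (log H₂)]
    have hneg : a * S - b * xs - c * capExp (H₂ + 1) q / (k + xs) < 0 := by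
      rw [div_lt_iff₀ hc] at hlt
      have : a * S < c * capExp (H₂ + 1) q / (k + xs) := by
        rw [lt_div_iff₀ hkx]; linarith
      have := mul_pos hb hxs0
      linarith
    have hI := intervalIntegral.integral_mono_on (μ := MeasureTheory.volume) hT.le (hcont.intervalIntegrable _ _)
      (intervalIntegrable_const
        (c := a * S - b * xs - c * capExp (H₂ + 1) q / (k + xs))) (fun t _ => by
        have := mul_le_mul_of_nonneg_left (hsS t) ha.le
        linarith)
    rw [intervalIntegral.integral_const, sub_zero, smul_eq_mul] at hI
    have := mul_neg_of_pos_of_neg hT hneg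
    have := comb q _ hq0 (neg_pos.2 (hI.trans_lt this))
    linarith
  have hq₂ : -|log L₂| ≤ q := by
    by_contra! h
    have hq0 : q < 0 := h.trans_le (neg_nonpos.2 (abs_nonneg _))
    have hlt : capExp (H₂ + 1) q < k * (a * m - b * xs) / c := by
      refine (min_le_left _ _).trans_lt (lt_of_lt_of_le ?_ hL₂')
      rw [← lt_log_iff_exp_lt hL₂0]; linarith [neg_abs_le (log L₂)]
    have hpos : 0 < a * m - b * xs - c * capExp (H₂ + 1) q / (k + xs) := by
      rw [lt_div_iff₀ hc] at hlt
      have : c * capExp (H₂ + 1) q / (k + xs) < a * m - b * xs := by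
        rw [div_lt_iff₀ hkx]
        nlinarith
      linarith
    have hI := intervalIntegral.integral_mono_on (μ := MeasureTheory.volume) hT.le (intervalIntegrable_const
        (c := a * m - b * xs - c * capExp (H₂ + 1) q / (k + xs)))
        (hcont.intervalIntegrable _ _) (fun t _ => by
        have := mul_le_mul_of_nonneg_left (hsm t) ha.le
        linarith)
    rw [intervalIntegral.integral_const, sub_zero, smul_eq_mul] at hI
    have := comb (-q) _ (by linarith) ((mul_pos hT hpos).trans_le hI)
    linarith
  exact ⟨rfl, hq₂, hq₁⟩

/-- Positive periodic solutions of the periodically forced predator-prey system with explicit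
bounds, assuming the threshold condition `b * xs < a * m`, where `xs` is the prey level balancing
the predator equation and `m` a lower bound of the forcing. -/
lemma exists_periodic_predator_prey {a b c d e k m S T xs : ℝ} (ha : 0 < a) (hb : 0 < b)
    (hc : 0 < c) (he : 0 < e) (hk : 0 < k) (hde : e < d) (hT : 0 < T)
    (hxs : (d - e) * xs = k * e) (hthr : b * xs < a * m)
    {s : ℝ → ℝ} (hs : Continuous s) (hsT : ∀ t, s (t + T) = s t)
    (hsm : ∀ t, m ≤ s t) (hsS : ∀ t, s t ≤ S) :
    ∃ x₁ x₂ : ℝ → ℝ,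
      (∀ t, HasDerivAt x₁ (a * s t * x₁ t - b * x₁ t ^ 2 - c * x₂ t * (x₁ t / (k + x₁ t))) t) ∧
      (∀ t, HasDerivAt x₂ (d * x₂ t * (x₁ t / (k + x₁ t)) - e * x₂ t) t) ∧
      (∀ t, x₁ (t + T) = x₁ t) ∧ (∀ t, x₂ (t + T) = x₂ t) ∧
      ∀ t, x₁ t ≤ a * S / b ∧ xs * exp (-(a * S * T)) ≤ x₁ t ∧
        x₂ t ≤ (k + xs) * (a * S) / c * exp ((d * (a * S / b) / (k + a * S / b) - e) * T) ∧
        k * (a * m - b * xs) / c * exp (-(e * T)) ≤ x₂ t := by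
  have hxs0 : 0 < xs := by
    have : 0 < (d - e) * xs := by rw [hxs]; positivity
    exact (mul_pos_iff_of_pos_left (by linarith)).1 this
  have hd0 : 0 < d := he.trans hde
  have hmS : m ≤ S := (hsm 0).trans (hsS 0)
  have haS : b * xs < a * S := hthr.trans_le (mul_le_mul_of_nonneg_left hmS ha.le)
  have haS0 : 0 < a * S := lt_trans (by positivity) haS
  have ham0 : 0 < a * m := lt_trans (by positivity) hthr
  have hm0 : 0 < m := (mul_pos_iff_of_pos_left ha).1 ham0
  have hsabs : ∀ t, |s t| ≤ S := fun t => by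
    rw [abs_of_pos (hm0.trans_le (hsm t))]; exact hsS t
  set H₁ := a * S / b with hH₁
  set L₁ := xs * exp (-(a * S * T)) with hL₁
  set H₂ := (k + xs) * (a * S) / c * exp ((d * H₁ / (k + H₁) - e) * T) with hH₂
  set L₂ := k * (a * m - b * xs) / c * exp (-(e * T)) with hL₂
  have hH₁0 : 0 < H₁ := by positivity
  have hxsH : xs < H₁ := by rw [hH₁, lt_div_iff₀ hb]; linarith
  have hL₁0 : 0 < L₁ := by positivity
  have hY0 : 0 < (k + xs) * (a * S) / c := by positivity
  have hH₂0 : 0 < H₂ := by positivity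
  have hY : (k + xs) * (a * S) / c ≤ H₂ := by
    refine le_mul_of_one_le_right hY0.le (one_le_exp ?_)
    refine mul_nonneg ?_ hT.le
    rw [sub_nonneg, le_div_iff₀ (by linarith)]
    nlinarith
  have hsub : 0 < a * m - b * xs := by linarith
  have hL₂0 : 0 < L₂ := by positivity
  have hL₂' : L₂ ≤ k * (a * m - b * xs) / c := by
    refine mul_le_of_le_one_right (by positivity) (exp_le_one_iff.2 ?_)
    have : 0 < e * T := by positivity
    linarith
  have hB₁0 : 0 < H₁ + 1 := by linarith
  have hB₂0 : 0 < H₂ + 1 := by linarith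
  set f := capField a b c d e k (H₁ + 1) (H₂ + 1) s with hf
  have hfc : Continuous (Function.uncurry f) := continuous_capField hk hB₁0 hs
  have key : ∀ l ∈ Set.Ioc (0 : ℝ) 1, ∀ u : ℝ → ℝ × ℝ, (∀ t, u (t + T) = u t) →
      (∀ t, HasDerivAt u (l • f t (u t)) t) → ∀ t,
      exp (u t).1 ≤ H₁ ∧ L₁ ≤ exp (u t).1 ∧ exp (u t).2 ≤ H₂ ∧ L₂ ≤ exp (u t).2 := by
    intro l hl u hup hud t
    exact apriori_bounds_s1 (u₁ := fun t => (u t).1) (u₂ := fun t => (u t).2) ha hb hc he hk hde hT hxs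
      hthr hl hsm hsS (lt_add_one H₁) (lt_add_one H₂) (fun t => by simp only [hup])
      (fun t => by simp only [hup]) (fun t => (hud t).fst) (fun t => (hud t).snd) t
  obtain ⟨u, hup, hud⟩ := exists_periodic_of_apriori f hfc _ _
    (fun t => lipschitzWith_capField hb hc hd0 hk hB₁0 hB₂0 s t)
    (fun t x => norm_capField_le ha hb hc hd0 he hk hB₁0 hB₂0 hsabs t x) T hT
    (fun t x => by simp only [hf, capField, hsT]) (log xs, 0)
    (|log xs| + |log L₁| + |log H₁| + |log L₂| + |log H₂| + 1) (by positivity) (by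
      intro l hl u hup hud
      obtain ⟨h1, h2, h3, h4⟩ := key l hl u hup hud 0
      rw [← le_log_iff_exp_le hH₁0] at h1
      rw [← log_le_iff_le_exp hL₁0] at h2
      rw [← le_log_iff_exp_le hH₂0] at h3
      rw [← log_le_iff_le_exp hL₂0] at h4
      rw [Prod.norm_def, max_lt_iff, Real.norm_eq_abs, Real.norm_eq_abs, abs_lt, abs_lt]
      simp only [Prod.fst_sub, Prod.snd_sub]
      refine ⟨⟨?_, ?_⟩, ?_, ?_⟩ <;>
      linarith [le_abs_self (log xs), neg_abs_le (log xs), le_abs_self (log L₁),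
        neg_abs_le (log L₁), le_abs_self (log H₁), neg_abs_le (log H₁), le_abs_self (log L₂),
        neg_abs_le (log L₂), le_abs_self (log H₂), neg_abs_le (log H₂)])
    (by
      rintro μ hμ ⟨p, q⟩ h1 h2
      have hint : IntervalIntegrable (fun t => f t ((log xs, 0) + (p, q))) MeasureTheory.volume 0 T :=
        (hfc.comp (continuous_id.prodMk continuous_const)).intervalIntegrable _ _
      have i1 := (ContinuousLinearMap.fst ℝ ℝ ℝ).intervalIntegral_comp_comm hint
      have i2 := (ContinuousLinearMap.snd ℝ ℝ ℝ).intervalIntegral_comp_comm hint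
      simp only [ContinuousLinearMap.coe_fst', ContinuousLinearMap.coe_snd'] at i1 i2
      simp only at h1 h2
      rw [← i2] at h1
      rw [← i1] at h2
      simp only [hf, capField, Prod.mk_add_mk, zero_add, intervalIntegral.integral_const, sub_zero,
        smul_eq_mul] at h1 h2
      obtain ⟨rfl, hq₂, hq₁⟩ := eq_zero_and_bounds_of_averaged ha hb hc hd0 hk hT hxs0 hxs hthr hs
        hsm hsS hxsH hY hH₂0 hL₂0 hL₂' hμ h1 h2
      rw [Prod.norm_def, max_lt_iff, norm_zero, Real.norm_eq_abs, abs_lt]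
      refine ⟨by positivity, ?_, ?_⟩ <;>
      linarith [abs_nonneg (log xs), abs_nonneg (log L₁), abs_nonneg (log H₁), abs_nonneg (log L₂),
        abs_nonneg (log H₂)])
  have hbd := key 1 ⟨zero_lt_one, le_rfl⟩ u hup (fun t => by simpa using hud t)
  have hc₁ : ∀ t, capExp (H₁ + 1) (u t).1 = exp (u t).1 := fun t =>
    min_eq_left (by linarith [(hbd t).1])
  have hc₂ : ∀ t, capExp (H₂ + 1) (u t).2 = exp (u t).2 := fun t =>
    min_eq_left (by linarith [(hbd t).2.2.1])
  refine ⟨fun t => exp (u t).1, fun t => exp (u t).2, fun t => ?_, fun t => ?_,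
    fun t => by simp only [hup], fun t => by simp only [hup], hbd⟩
  · have h : HasDerivAt (fun t => (u t).1) (f t (u t)).1 t := (hud t).fst
    convert h.exp using 1
    simp only [hf, capField, hc₁, hc₂]
    ring
  · have h : HasDerivAt (fun t => (u t).2) (f t (u t)).2 t := (hud t).snd
    convert h.exp using 1
    simp only [hf, capField, hc₁]
    ring

/-! ### The lagoon parameters -/

/-- Comparison of the predator bound of `exists_periodic_predator_prey`, at the lagoon parameters,
with the claimed one. The exponents differ by `139.2`, which absorbs the loss in the prefactor. -/
lemma predator_bound_le {S : ℝ} (hS : 0 < S) :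
    (100 + 580 / 1.1) * (1.29 * S) / 0.93 *
      exp ((6.9 * (1.29 * S / 0.0002) / (100 + 1.29 * S / 0.0002) - 5.8) * 12) ≤
    max 1 ((100 + 580 / 1.1) * (1.29 * S - 0.116 / 1.1) / 0.93) *
      exp (534060 * S / (100 + 6450 * S) + 69.6) := by
  have hX : 1.29 * S / 0.0002 = 6450 * S := by ring
  have hE : exp (534060 * S / (100 + 6450 * S) + 69.6)
      = exp 69.6 * exp 69.6 * exp ((6.9 * (6450 * S) / (100 + 6450 * S) - 5.8) * 12) := by
    rw [← exp_add, ← exp_add]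
    congr 1
    ring
  rw [hX, hE, ← mul_assoc (max _ _)]
  refine mul_le_mul_of_nonneg_right ?_ (exp_pos _).le
  have h70 : (70.6 : ℝ) ≤ exp 69.6 := by linarith [add_one_le_exp (69.6 : ℝ)]
  have hbig : (1000 : ℝ) ≤ exp 69.6 * exp 69.6 := by nlinarith
  rcases le_total (2 * (0.116 / 1.1)) (1.29 * S) with h | h
  · calc (100 + 580 / 1.1) * (1.29 * S) / 0.93
        ≤ (100 + 580 / 1.1) * (1.29 * S - 0.116 / 1.1) / 0.93 * 1000 := by
          norm_num at h ⊢
          linarith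
      _ ≤ _ := mul_le_mul (le_max_right _ _) hbig (by norm_num) (by positivity)
  · calc (100 + 580 / 1.1) * (1.29 * S) / 0.93 ≤ 1 * 1000 := by
          norm_num at h ⊢
          linarith
      _ ≤ _ := mul_le_mul (le_max_left _ _) hbig (by norm_num) (by positivity)

/-- Corollary: existence of a 12-periodic solution for the concrete parameter values
of the lagoon model. -/
theorem lagoon_periodic_solution_concrete
    (M N0 : ℝ) (hM : M > 0.116 / 1.419) (hN0 : 0 < N0) (hN0' : N0 < M - 0.116 / 1.419) :
    ∃ η > 0, ∀ N ∈ Set.Icc (0 : ℝ) N0,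
      ∃ x1 x2 : ℝ → ℝ,
        Differentiable ℝ x1 ∧ Differentiable ℝ x2 ∧
        (∀ t : ℝ, deriv x1 t =
            (1.29 : ℝ) * (M + N * Real.sin (π * t / 6 + 1)) * x1 t
              - (0.0002 : ℝ) * (x1 t) ^ 2 - (0.93 : ℝ) * x2 t * (x1 t / (100 + x1 t))) ∧
        (∀ t : ℝ, deriv x2 t =
            (6.9 : ℝ) * x2 t * (x1 t / (100 + x1 t)) - (5.8 : ℝ) * x2 t) ∧
        (∀ t : ℝ, x1 (t + 12) = x1 t) ∧
        (∀ t : ℝ, x2 (t + 12) = x2 t) ∧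
        η ≤ x1 0 ∧ x1 0 ≤ (1.29 / 0.0002) * (M + N) + η ∧
        η ≤ x2 0 ∧
        x2 0 ≤
          max 1 ((100 + 580 / 1.1) * (1.29 * (M + N) - 0.116 / 1.1) / 0.93) *
            Real.exp (534060 * (M + N) / (100 + 6450 * (M + N)) + 69.6) + η := by
  -- `0.0002 * (580 / 1.1) = 0.116 / 1.1` and `1.29 * 0.116 / 1.419 = 0.116 / 1.1`, so this is the
  -- threshold condition for the weakest forcing.
  have hM' : 0.116 / 1.1 < 1.29 * (M - N0) := by
    norm_num at hN0' ⊢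
    linarith
  have hk : (0 : ℝ) < 100 * (1.29 * (M - N0) - 0.0002 * (580 / 1.1)) / 0.93 := by
    norm_num at hM' ⊢
    linarith
  refine ⟨min (580 / 1.1 * exp (-(1.29 * (M + N0) * 12)))
    (100 * (1.29 * (M - N0) - 0.0002 * (580 / 1.1)) / 0.93 * exp (-(5.8 * 12))),
    lt_min (by positivity) (mul_pos hk (exp_pos _)), ?_⟩
  rintro N ⟨hN, hNN⟩
  have hS : 0 < M + N := by
    norm_num at hM
    linarith
  have hsin : ∀ t : ℝ, -N ≤ N * Real.sin (π * t / 6 + 1) ∧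
      N * Real.sin (π * t / 6 + 1) ≤ N := fun t => by
    constructor
    · linarith [mul_le_mul_of_nonneg_left (Real.neg_one_le_sin (π * t / 6 + 1)) hN]
    · linarith [mul_le_mul_of_nonneg_left (Real.sin_le_one (π * t / 6 + 1)) hN]
  obtain ⟨x₁, x₂, hd₁, hd₂, hp₁, hp₂, hbd⟩ := exists_periodic_predator_prey
    (a := 1.29) (b := 0.0002) (c := 0.93) (d := 6.9) (e := 5.8) (k := 100) (m := M - N)
    (S := M + N) (T := 12) (xs := 580 / 1.1) (by norm_num) (by norm_num) (by norm_num)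
    (by norm_num) (by norm_num) (by norm_num) (by norm_num) (by norm_num)
    (by
      norm_num at hM' ⊢
      linarith)
    (s := fun t => M + N * Real.sin (π * t / 6 + 1)) (by fun_prop)
    (fun t => by
      have : π * (t + 12) / 6 + 1 = π * t / 6 + 1 + 2 * π := by ring
      simp only [this, Real.sin_add_two_pi])
    (fun t => by linarith [(hsin t).1]) (fun t => by linarith [(hsin t).2])
  obtain ⟨h1, h2, h3, h4⟩ := hbd 0
  have hη : 0 < min (580 / 1.1 * exp (-(1.29 * (M + N0) * 12)))
      (100 * (1.29 * (M - N0) - 0.0002 * (580 / 1.1)) / 0.93 * exp (-(5.8 * 12))) :=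
    lt_min (by positivity) (mul_pos hk (exp_pos _))
  refine ⟨x₁, x₂, fun t => (hd₁ t).differentiableAt, fun t => (hd₂ t).differentiableAt,
    fun t => (hd₁ t).deriv, fun t => (hd₂ t).deriv, hp₁, hp₂, ?_, ?_, ?_, ?_⟩
  · refine (min_le_left _ _).trans (le_trans ?_ h2)
    refine mul_le_mul_of_nonneg_left (exp_le_exp.2 ?_) (by norm_num)
    linarith
  · have : (1.29 : ℝ) * (M + N) / 0.0002 = 1.29 / 0.0002 * (M + N) := by ring
    linarith
  · refine (min_le_right _ _).trans (le_trans ?_ h4)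
    gcongr
  · linarith [h3.trans (predator_bound_le hS)]
end

section
/- Let λ1, λ2, λ3 > 0, k > 0, M > 0, N ≥ 0, ε ≥ 0, and let t ∈ ℝ and x1 > 0. If x2 ≥ f_{ε,N,2}(x1) := ((λ1(M + N) − λ2·x1)(k + x1) + ε + ε·k/x1)/λ3, then P_{ε,N}(t, x1, x2) := λ1·(M + N·sin(π t/6 + 1))·x1 − λ2·x1² − λ3·x2·x1/(k + x1) + ε ≤ 0. -/
/-!
Since `N * x1 ≥ 0`, the expression is largest when the sine equals `1`, and it is decreasing in `x2`
because `l3 * x1 / (k + x1) > 0`. The lower bound on `x2` is exactly the value at which the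
expression with sine `1` vanishes, so both bounds together give nonpositivity.
-/

open Real

/-- If `x2 ≥ f_{ε,N,2}(x1)` then `P_{ε,N}(t, x1, x2) ≤ 0`. -/
theorem P_nonpos_above_f2
    (l1 l2 l3 k M N ε t x1 x2 : ℝ)
    (h1 : 0 < l1) (h2 : 0 < l2) (h3 : 0 < l3) (hk : 0 < k)
    (hM : 0 < M) (hN : 0 ≤ N) (hε : 0 ≤ ε) (hx1 : 0 < x1)
    (hx2 : x2 ≥ ((l1 * (M + N) - l2 * x1) * (k + x1) + ε + ε * k / x1) / l3) :
    l1 * (M + N * Real.sin (π * t / 6 + 1)) * x1 - l2 * x1 ^ 2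
      - l3 * x2 * (x1 / (k + x1)) + ε ≤ 0 := by
  have hkx : 0 < k + x1 := by positivity
  have key : ((l1 * (M + N) - l2 * x1) * (k + x1) + ε + ε * k / x1) * (x1 / (k + x1))
      = l1 * (M + N) * x1 - l2 * x1 ^ 2 + ε := by
    field_simp
    ring
  have hx : (l1 * (M + N) - l2 * x1) * (k + x1) + ε + ε * k / x1 ≤ l3 * x2 := by
    have := (div_le_iff₀ h3).1 hx2
    linarith
  have hmul := mul_le_mul_of_nonneg_right hx (div_pos hx1 hkx).le
  have hsin : l1 * (M + N * Real.sin (π * t / 6 + 1)) * x1 ≤ l1 * (M + N) * x1 := by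
    have := mul_le_of_le_one_right hN (Real.sin_le_one (π * t / 6 + 1))
    gcongr
  linarith
end

section
/- Let λ1, λ2, λ3 > 0, k > 0, M > 0, N ≥ 0, ε ≥ 0, and let t ∈ ℝ and x1 > 0. If 0 ≤ x2 ≤ f_{ε,N,1}(x1) := ((λ1(M − N) − λ2·x1)(k + x1) + ε + ε·k/x1)/λ3, then P_{ε,N}(t, x1, x2) := λ1·(M + N·sin(π t/6 + 1))·x1 − λ2·x1² − λ3·x2·x1/(k + x1) + ε ≥ 0. -/
/-!
Multiplying the bound on `x2` by `l3 * x1 / (k + x1)` turns it into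
`l3 * x2 * (x1 / (k + x1)) ≤ (l1 * (M - N) - l2 * x1) * x1 + ε`, because
`(ε + ε * k / x1) * (x1 / (k + x1)) = ε`. The expression is therefore at least
`l1 * N * (1 + sin (π * t / 6 + 1)) * x1`, which is nonnegative.
-/

open Real

/-- If `0 ≤ x2 ≤ f_{ε,N,1}(x1)` then `P_{ε,N}(t, x1, x2) ≥ 0`. -/
theorem P_nonneg_below_f1
    (l1 l2 l3 k M N ε t x1 x2 : ℝ)
    (h1 : 0 < l1) (h2 : 0 < l2) (h3 : 0 < l3) (hk : 0 < k)
    (hM : 0 < M) (hN : 0 ≤ N) (hε : 0 ≤ ε) (hx1 : 0 < x1)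
    (hx2 : 0 ≤ x2)
    (hx2' : x2 ≤ ((l1 * (M - N) - l2 * x1) * (k + x1) + ε + ε * k / x1) / l3) :
    l1 * (M + N * Real.sin (π * t / 6 + 1)) * x1 - l2 * x1 ^ 2
      - l3 * x2 * (x1 / (k + x1)) + ε ≥ 0 := by
  have hkx : 0 < k + x1 := add_pos hk hx1
  have hbound : l3 * x2 * (x1 / (k + x1)) ≤ (l1 * (M - N) - l2 * x1) * x1 + ε := by
    rw [le_div_iff₀ h3] at hx2'
    calc l3 * x2 * (x1 / (k + x1)) = x2 * l3 * (x1 / (k + x1)) := by ring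
      _ ≤ ((l1 * (M - N) - l2 * x1) * (k + x1) + ε + ε * k / x1) * (x1 / (k + x1)) := by
        gcongr
      _ = (l1 * (M - N) - l2 * x1) * x1 + ε := by
        field_simp
        ring
  have hsin : 0 ≤ 1 + Real.sin (π * t / 6 + 1) := by
    linarith [Real.neg_one_le_sin (π * t / 6 + 1)]
  have hosc : 0 ≤ l1 * N * (1 + Real.sin (π * t / 6 + 1)) * x1 := by positivity
  linarith
end

section
/- Let λ1, λ2, λ3 > 0, k > 0, M > 0, N ≥ 0 and ε > 0. Then there exists a unique x1 > 0 such that f_{ε,N,2}(x1) = 0, where f_{ε,N,2}(x1) = ((λ1(M + N) − λ2·x1)(k + x1) + ε + ε·k/x1)/λ3; this unique positive root is denoted p_{ε,N,1}. -/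
/-!
Since `ε + ε * k / x = ε * (k + x) / x`, the function factors for `x > 0` as
`(k + x) * (A * x - l2 * x ^ 2 + ε) / (x * l3)` with `A = l1 * (M + N)`, so its positive roots are
those of the quadratic `l2 * x ^ 2 - A * x - ε`. The product of the roots of this quadratic is
`-ε / l2 < 0`, so exactly one of them is positive, and the quadratic formula gives it.
-/

lemma f2_eq_zero_iff {A l2 l3 k ε x : ℝ} (h3 : 0 < l3) (hk : 0 < k) (hx : 0 < x) :
    ((A - l2 * x) * (k + x) + ε + ε * k / x) / l3 = 0 ↔ l2 * x ^ 2 - A * x - ε = 0 := by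
  have hkx : k + x ≠ 0 := by positivity
  have key : ((A - l2 * x) * (k + x) + ε + ε * k / x) / l3
      = -((k + x) / (x * l3)) * (l2 * x ^ 2 - A * x - ε) := by
    field_simp
    ring
  have hne : -((k + x) / (x * l3)) ≠ 0 := by
    have : 0 < (k + x) / (x * l3) := by positivity
    linarith
  rw [key, mul_eq_zero, or_iff_right hne]

open Real

/-- Existence and uniqueness of the positive root `p_{ε,N,1}` of `f_{ε,N,2}`. -/
theorem f2_unique_positive_root
    (l1 l2 l3 k M N ε : ℝ)
    (h1 : 0 < l1) (h2 : 0 < l2) (h3 : 0 < l3) (hk : 0 < k)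
    (hM : 0 < M) (hN : 0 ≤ N) (hε : 0 < ε) :
    ∃! x1 : ℝ, 0 < x1 ∧
      ((l1 * (M + N) - l2 * x1) * (k + x1) + ε + ε * k / x1) / l3 = 0 := by
  have hA : 0 < l1 * (M + N) := by positivity
  generalize l1 * (M + N) = A at hA ⊢
  have hs : √(A ^ 2 + 4 * l2 * ε) ^ 2 = A ^ 2 + 4 * l2 * ε := sq_sqrt (by positivity)
  have hs0 : 0 ≤ √(A ^ 2 + 4 * l2 * ε) := sqrt_nonneg _
  generalize √(A ^ 2 + 4 * l2 * ε) = s at hs hs0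
  have hpos : 0 < (A + s) / (2 * l2) := by positivity
  have hroot : l2 * ((A + s) / (2 * l2)) ^ 2 - A * ((A + s) / (2 * l2)) - ε = 0 := by
    field_simp
    linear_combination hs
  generalize (A + s) / (2 * l2) = x at hpos hroot
  refine ⟨x, ⟨hpos, (f2_eq_zero_iff h3 hk hpos).2 hroot⟩, ?_⟩
  rintro y ⟨hy, hfy⟩
  have hy_root := (f2_eq_zero_iff h3 hk hy).1 hfy
  -- Eliminating `A` between the two quadratic equations.
  have hmul : (y - x) * (l2 * x * y + ε) = 0 := by
    linear_combination x * hy_root - y * hroot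
  have hne : l2 * x * y + ε ≠ 0 := by positivity
  exact sub_eq_zero.1 ((mul_eq_zero.1 hmul).resolve_right hne)
end

section
/- Let λ1, λ2, λ3 > 0, k > 0, M > 0 and N0 ≥ 0. For ε > 0 and N ∈ [0, N0], let p_{ε,N,1} denote the unique positive root of f_{ε,N,2}(x1) = ((λ1(M + N) − λ2·x1)(k + x1) + ε + ε·k/x1)/λ3. Then p_{ε,N,1} → p_{N,1} = (λ1/λ2)(M + N) as ε → 0⁺, uniformly in N ∈ [0, N0]; that is, for every δ > 0 there exists ε0 > 0 such that for all ε ∈ (0, ε0) and all N ∈ [0, N0], |p_{ε,N,1} − (λ1/λ2)(M + N)| < δ. -/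
open Real

/-!
Since `ε + ε k / p = (k + p) ε / p`, the numerator of `f_{ε,N,2}(p)` factors as
`(k + p) (l1 (M + N) - l2 p + ε / p)`. Hence a positive root satisfies
`p (l2 p - l1 (M + N)) = ε`, so `l2 p > l1 (M + N) ≥ l1 M` and
`0 < p - (l1 / l2) (M + N) = ε / (l2 p) < ε / (l1 M)`, a bound independent of `N`.
-/

/-- The unique positive root `p_{ε,N,1}` of `f_{ε,N,2}` converges to
`p_{N,1} = (λ1/λ2)(M + N)` as `ε → 0⁺`, uniformly in `N ∈ [0, N0]`. -/
theorem p_eps_tendsto_p_uniformly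
    (l1 l2 l3 k M N0 : ℝ)
    (h1 : 0 < l1) (h2 : 0 < l2) (h3 : 0 < l3) (hk : 0 < k)
    (hM : 0 < M) (hN0 : 0 ≤ N0) :
    ∀ δ > 0, ∃ ε0 > 0, ∀ ε ∈ Set.Ioo (0 : ℝ) ε0, ∀ N ∈ Set.Icc (0 : ℝ) N0,
      ∀ p : ℝ, (0 < p ∧
          ((l1 * (M + N) - l2 * p) * (k + p) + ε + ε * k / p) / l3 = 0) →
        |p - l1 / l2 * (M + N)| < δ := by
  intro δ hδ
  refine ⟨δ * (l1 * M), by positivity, ?_⟩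
  rintro ε ⟨hε, hε0⟩ N ⟨hN, -⟩ p ⟨hp, hroot⟩
  have hfactor : ((l1 * (M + N) - l2 * p) * (k + p) + ε + ε * k / p) / l3
      = (k + p) * (ε - p * (l2 * p - l1 * (M + N))) / (p * l3) := by
    field_simp
    ring
  have hkey : p * (l2 * p - l1 * (M + N)) = ε := by
    rw [hfactor, div_eq_zero_iff, mul_eq_zero] at hroot
    rcases hroot with (h | h) | h
    · linarith
    · linarith
    · exact absurd h (by positivity)
  have hgap : 0 < l2 * p - l1 * (M + N) :=
    pos_of_mul_pos_right (hkey ▸ hε) hp.le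
  have hl : l1 * M < l2 * p := by nlinarith [mul_nonneg h1.le hN]
  have hdiff : p - l1 / l2 * (M + N) = ε / (l2 * p) := by
    rw [← hkey]
    field_simp
  have hlp : 0 < l2 * p := by positivity
  rw [hdiff, abs_of_pos (by positivity), div_lt_iff₀ hlp]
  exact hε0.trans (mul_lt_mul_of_pos_left hl hδ)
end

section
/- Let λ1, λ2, λ3 > 0, λ4 > λ5 > 0, k > 0, M > 0, and fix N0 ≥ 0 with (λ1/λ2)(M − N0) > r1, where r1 = λ5·k/(λ4 − λ5). Then there exists ε0 > 0 such that for every ε ∈ (0, ε0) and every N ∈ [0, N0] there exists a unique q_{ε,N,1} > 0 satisfying f_{ε,N,2}(q_{ε,N,1}) = g_ε(q_{ε,N,1}), where f_{ε,N,2}(x1) = ((λ1(M + N) − λ2·x1)(k + x1) + ε + ε·k/x1)/λ3 and g_ε(x1) = (λ4·x1/(λ5·(k + x1)))^(1/ε). -/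
open Real

/-!
Write `A = λ1 (M + N)` and `p = 1 / ε`. The left-hand side of the equation factors as
`(k + x) h(x) / λ3` with `h(x) = A - λ2 x + ε / x` strictly decreasing, so dividing by `k + x`
turns the equation into `h(x) / λ3 = g(x) / (k + x)`. The right-hand side is positive, which forces
`h(x) > 0` and hence `x < A / λ2 + 1` for small `ε`. On `(0, p k]` the quotient `g(x) / (k + x)` is
strictly increasing (`rpow_div_strict`), and for small `ε` this interval contains every possible
solution; this gives uniqueness. Existence is the intermediate value theorem: near `0` the term
`ε / x` dominates while `g ≤ 1`, and at `A / λ2 + 1` the left-hand side is nonpositive.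
The hypothesis on `ε` is uniform in `N ∈ [0, N0]` since `A ≤ λ1 (M + N0)`.
-/

/-- With `g x = (a x / (b (k + x))) ^ p`, the quotient `g x / (k + x)` is strictly increasing
on `(0, p k]` (stated without division). -/
lemma rpow_div_strict {a b k p x y : ℝ} (ha : 0 < a) (hb : 0 < b) (hk : 0 < k) (hp : 1 ≤ p)
    (hx : 0 < x) (hxy : x < y) (hy : y ≤ p * k) :
    (a * x / (b * (k + x))) ^ p * (k + y) < (a * y / (b * (k + y))) ^ p * (k + x) := by
  have hy0 : 0 < y := hx.trans hxy
  have hd : 0 < y - x := sub_pos.2 hxy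
  set t := k * (y - x) / (x * (k + y)) with ht
  have ht0 : 0 < t := by positivity
  have hbase : a * y / (b * (k + y)) = a * x / (b * (k + x)) * (1 + t) := by
    rw [ht]; field_simp; ring
  -- Bernoulli's inequality replaces the computation of the logarithmic derivative.
  have hbern : 1 + p * t ≤ (1 + t) ^ p :=
    one_add_mul_self_le_rpow_one_add (by linarith) hp
  have hlt : k + y < (1 + p * t) * (k + x) := by
    have h : (y - x) < p * t * (k + x) := by
      have e : p * t * (k + x) = (y - x) * (p * k * (k + x)) / (x * (k + y)) := by
        rw [ht]; field_simp
      rw [e, lt_div_iff₀ (by positivity)]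
      refine mul_lt_mul_of_pos_left ?_ hd
      nlinarith [mul_le_mul_of_nonneg_right hy (by positivity : 0 ≤ k + x),
        mul_lt_mul_of_pos_right hxy hk]
    linarith
  have hg : 0 < (a * x / (b * (k + x))) ^ p := rpow_pos_of_pos (by positivity) _
  rw [hbase, mul_rpow (by positivity) (by positivity), mul_assoc]
  refine mul_lt_mul_of_pos_left (hlt.trans_le ?_) hg
  exact mul_le_mul_of_nonneg_right hbern (by positivity)

/-- For all sufficiently small `ε > 0` and all `N ∈ [0, N0]`, there exists a unique
`q_{ε,N,1} > 0` with `f_{ε,N,2}(q_{ε,N,1}) = g_ε(q_{ε,N,1})`. -/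
theorem exists_unique_intersection
    (l1 l2 l3 l4 l5 k M N0 : ℝ)
    (h1 : 0 < l1) (h2 : 0 < l2) (h3 : 0 < l3) (h5 : 0 < l5) (h45 : l5 < l4)
    (hk : 0 < k) (hM : 0 < M) (hN0 : 0 ≤ N0)
    (hcond : l1 / l2 * (M - N0) > l5 * k / (l4 - l5)) :
    ∃ ε0 > 0, ∀ ε ∈ Set.Ioo (0 : ℝ) ε0, ∀ N ∈ Set.Icc (0 : ℝ) N0,
      ∃! q : ℝ, 0 < q ∧
        ((l1 * (M + N) - l2 * q) * (k + q) + ε + ε * k / q) / l3 =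
          (l4 * q / (l5 * (k + q))) ^ (1 / ε) := by
  have h4 : 0 < l4 := h5.trans h45
  have hB0 : 0 < l1 * (M + N0) / l2 + 1 := by positivity
  -- `ε < 1` gives `p ≥ 1`, `ε < l2` makes `h` negative at `A / l2 + 1`, and the last bound puts
  -- `A / l2 + 1` below `p k`.
  refine ⟨min 1 (min l2 (k / (l1 * (M + N0) / l2 + 1))), by positivity, ?_⟩
  rintro ε ⟨hε, hε'⟩ N ⟨hN, hNN⟩
  obtain ⟨hε1, hε23⟩ := lt_min_iff.1 hε'
  obtain ⟨hε2, hε3⟩ := lt_min_iff.1 hε23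
  have hp : 1 ≤ 1 / ε := (one_le_div hε).2 hε1.le
  set A := l1 * (M + N) with hA
  have hA0 : 0 < A := by positivity
  have hAle : A / l2 + 1 ≤ l1 * (M + N0) / l2 + 1 := by rw [hA]; gcongr
  set B := A / l2 + 1 with hB
  have hB1 : 1 < B := by have : 0 < A / l2 := by positivity
                         linarith
  have hl2B : l2 * B = A + l2 := by rw [hB]; field_simp
  have hBp : B ≤ 1 / ε * k := by
    rw [lt_div_iff₀ hB0] at hε3
    rw [one_div_mul_eq_div, le_div_iff₀ hε]
    nlinarith [mul_le_mul_of_nonneg_left hAle hε.le]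
  have hfac : ∀ q : ℝ, 0 < q → ((A - l2 * q) * (k + q) + ε + ε * k / q) / l3
      = (k + q) * (A - l2 * q + ε / q) / l3 := by
    intro q hq; field_simp; ring
  have hhB : ∀ q : ℝ, B ≤ q → A - l2 * q + ε / q ≤ 0 := by
    intro q hq
    have e1 : ε / q ≤ ε := div_le_self hε.le (by linarith)
    nlinarith [mul_le_mul_of_nonneg_left hq h2.le]
  have hgpos : ∀ q : ℝ, 0 < q → 0 < (l4 * q / (l5 * (k + q))) ^ (1 / ε) :=
    fun q hq => rpow_pos_of_pos (by positivity) _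
  have hsolB : ∀ q : ℝ, 0 < q → ((A - l2 * q) * (k + q) + ε + ε * k / q) / l3
      = (l4 * q / (l5 * (k + q))) ^ (1 / ε) → q < B := by
    intro q hq he
    by_contra! hc
    have hle : (k + q) * (A - l2 * q + ε / q) / l3 ≤ 0 :=
      div_nonpos_of_nonpos_of_nonneg
        (mul_nonpos_of_nonneg_of_nonpos (by positivity) (hhB q hc)) h3.le
    have := hgpos q hq
    rw [← he, hfac q hq] at this
    linarith
  have huniq : ∀ x y : ℝ, 0 < x → 0 < y →
      ((A - l2 * x) * (k + x) + ε + ε * k / x) / l3 = (l4 * x / (l5 * (k + x))) ^ (1 / ε) →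
      ((A - l2 * y) * (k + y) + ε + ε * k / y) / l3 = (l4 * y / (l5 * (k + y))) ^ (1 / ε) →
      ¬ x < y := by
    intro x y hx hy ex ey hxy
    have hlt := rpow_div_strict h4 h5 hk hp hx hxy ((hsolB y hy ey).le.trans hBp)
    rw [← ex, ← ey, hfac x hx, hfac y hy] at hlt
    have hh : A - l2 * y + ε / y < A - l2 * x + ε / x := by
      have e1 : ε / y < ε / x := div_lt_div_of_pos_left hε hx hxy
      nlinarith
    have := mul_lt_mul_of_pos_left hh (by positivity : 0 < (k + x) * (k + y) / l3)
    refine lt_asymm hlt ?_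
    calc _ = (k + x) * (k + y) / l3 * (A - l2 * y + ε / y) := by ring
      _ < _ := this
      _ = _ := by ring
  have hex : ∃ q : ℝ, 0 < q ∧ ((A - l2 * q) * (k + q) + ε + ε * k / q) / l3
      = (l4 * q / (l5 * (k + q))) ^ (1 / ε) := by
    have h45' : 0 < l4 - l5 := sub_pos.2 h45
    -- The three bounds ensure, in this order, `g ≤ 1`, `0 ≤ A - l2 x` and `l3 ≤ ε k / x`.
    obtain ⟨a, ha0, ha1, ha2, ha3⟩ : ∃ a : ℝ, 0 < a ∧ a ≤ l5 * k / (l4 - l5) ∧ a ≤ A / l2 ∧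
        a ≤ ε * k / l3 :=
      ⟨min (l5 * k / (l4 - l5)) (min (A / l2) (ε * k / l3)), by positivity, min_le_left _ _,
        (min_le_right _ _).trans (min_le_left _ _), (min_le_right _ _).trans (min_le_right _ _)⟩
    have haB : a ≤ B := by linarith
    rw [le_div_iff₀ h45'] at ha1
    rw [le_div_iff₀ h2] at ha2
    rw [le_div_iff₀ h3] at ha3
    have hga : (l4 * a / (l5 * (k + a))) ^ (1 / ε) ≤ 1 := by
      refine rpow_le_one (by positivity) ?_ (by positivity)
      rw [div_le_one (by positivity)]
      linarith
    have hfa : 1 ≤ ((A - l2 * a) * (k + a) + ε + ε * k / a) / l3 := by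
      rw [one_le_div h3]
      have e1 : l3 ≤ ε * k / a := by rw [le_div_iff₀ ha0]; linarith
      have e2 : 0 ≤ (A - l2 * a) * (k + a) := mul_nonneg (by linarith) (by positivity)
      linarith
    have hfB : ((A - l2 * B) * (k + B) + ε + ε * k / B) / l3 ≤ 0 := by
      rw [hfac B (by linarith)]
      exact div_nonpos_of_nonpos_of_nonneg
        (mul_nonpos_of_nonneg_of_nonpos (by linarith) (hhB B le_rfl)) h3.le
    have hgB := hgpos B (by linarith)
    have hcf : ContinuousOn (fun q : ℝ => ((A - l2 * q) * (k + q) + ε + ε * k / q) / l3)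
        (Set.Icc a B) := by
      refine ContinuousOn.div_const (ContinuousOn.add (by fun_prop) ?_) _
      exact continuousOn_const.div continuousOn_id fun q hq => (ha0.trans_le hq.1).ne'
    have hcg : ContinuousOn (fun q : ℝ => (l4 * q / (l5 * (k + q))) ^ (1 / ε))
        (Set.Icc a B) := by
      refine ContinuousOn.rpow_const (ContinuousOn.div (by fun_prop) (by fun_prop) ?_) ?_
      · intro q hq
        have := ha0.trans_le hq.1
        positivity
      · exact fun q hq => Or.inr (by positivity)
    obtain ⟨q, hq, he⟩ := intermediate_value_Icc haB (hcg.sub hcf)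
      (show (0 : ℝ) ∈ Set.Icc _ _ from ⟨by simp only [Pi.sub_apply]; linarith,
        by simp only [Pi.sub_apply]; linarith⟩)
    simp only [Pi.sub_apply] at he
    exact ⟨q, ha0.trans_le hq.1, by linarith⟩
  obtain ⟨q, hq, he⟩ := hex
  refine ⟨q, ⟨hq, he⟩, ?_⟩
  rintro y ⟨hy, ey⟩
  exact le_antisymm (not_lt.1 (huniq q y hq hy he ey)) (not_lt.1 (huniq y q hy hq ey he))
end

section
/- Let λ1, λ2, λ3 > 0, λ4 > λ5 > 0, k > 0, M > 0, and fix N0 ≥ 0 with (λ1/λ2)(M − N0) > r1, where r1 = λ5·k/(λ4 − λ5). For small ε > 0 and N ∈ [0, N0], let q_{ε,N,1} > 0 denote the unique solution of f_{ε,N,2}(q_{ε,N,1}) = g_ε(q_{ε,N,1}) and set q_{ε,N,2} = f_{ε,N,2}(q_{ε,N,1}). Then, for each fixed N ∈ [0, N0], q_{ε,N,1} → r1 and q_{ε,N,2} → r_{N,2} = (k + r1)(λ1(M + N) − λ2·r1)/λ3 as ε → 0⁺. -/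
/-!
Write `r1 = l5 k / (l4 - l5)` and `b x = l4 x / (l5 (k + x))`. The base `b` is increasing on
`x > 0` with `b r1 = 1`, and `g_ε = b ^ (1/ε)`. A solution `q` staying above some `c > r1` would
have `g_ε q ≥ b(c) ^ (1/ε) → ∞`, whereas `f_{ε,N,2}` is bounded above on `x > c` uniformly in
`ε ≤ 1` (`f_upper`). A solution staying below some `c < r1` would have
`g_ε q ≤ b(c) ^ (1/ε) → 0`, whereas `f_{ε,N,2}` is bounded below by a positive constant on
`0 < x ≤ r1`, because `l1 (M + N) > l2 r1` (`f_lower`). Hence `q → r1`, and the limit of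
`f_{ε,N,2}(q)` follows by continuity, the two terms with a factor `ε` vanishing since `r1 > 0`.
-/

open Real Filter

lemma base_mono {l4 l5 k x y : ℝ} (h4 : 0 < l4) (h5 : 0 < l5) (hk : 0 < k)
    (hx : 0 < x) (hxy : x ≤ y) :
    l4 * x / (l5 * (k + x)) ≤ l4 * y / (l5 * (k + y)) := by
  have hy : 0 < y := hx.trans_le hxy
  rw [div_le_div_iff₀ (by positivity) (by positivity)]
  have : 0 ≤ l4 * l5 * k * (y - x) := by
    have := sub_nonneg.2 hxy
    positivity
  nlinarith

/-- Completing the square in the quadratic term gives the bound, uniformly in `ε ≤ 1`. -/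
lemma f_upper {a l2 l3 k c x ε : ℝ} (h2 : 0 < l2) (h3 : 0 < l3) (hk : 0 < k) (hc : 0 < c)
    (hcx : c ≤ x) (hε1 : ε ≤ 1) :
    ((a - l2 * x) * (k + x) + ε + ε * k / x) / l3 ≤
      (a * k + (a - l2 * k) ^ 2 / (4 * l2) + 1 + k / c) / l3 := by
  have hq : (a - l2 * x) * (k + x) ≤ a * k + (a - l2 * k) ^ 2 / (4 * l2) := by
    have : a * k + (a - l2 * k) ^ 2 / (4 * l2) - (a - l2 * x) * (k + x)
        = (a - l2 * k - 2 * l2 * x) ^ 2 / (4 * l2) := by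
      field_simp
      ring
    have h0 : 0 ≤ (a - l2 * k - 2 * l2 * x) ^ 2 / (4 * l2) := by positivity
    linarith
  have hd : ε * k / x ≤ k / c := by
    have : ε * k ≤ k := by nlinarith
    gcongr
  gcongr

lemma f_lower {a l2 l3 k r x ε : ℝ} (h2 : 0 < l2) (h3 : 0 < l3) (hk : 0 < k)
    (hx : 0 < x) (hxr : x ≤ r) (ha : l2 * r < a) (hε : 0 < ε) :
    (a - l2 * r) * k / l3 ≤ ((a - l2 * x) * (k + x) + ε + ε * k / x) / l3 := by
  have hd : 0 ≤ ε * k / x := by positivity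
  have h : (a - l2 * r) * k ≤ (a - l2 * x) * (k + x) := by
    have : l2 * x ≤ l2 * r := by gcongr
    have := sub_pos.2 ha
    apply mul_le_mul <;> linarith
  gcongr
  linarith

/-- The intersection point `q_{ε,N,1}` of `f_{ε,N,2}` and `g_ε` converges to `r1`,
and `q_{ε,N,2} = f_{ε,N,2}(q_{ε,N,1})` converges to `r_{N,2}`, as `ε → 0⁺`. -/
theorem q_eps_tendsto_r
    (l1 l2 l3 l4 l5 k M N0 : ℝ)
    (h1 : 0 < l1) (h2 : 0 < l2) (h3 : 0 < l3) (h5 : 0 < l5) (h45 : l5 < l4)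
    (hk : 0 < k) (hM : 0 < M) (hN0 : 0 ≤ N0)
    (hcond : l1 / l2 * (M - N0) > l5 * k / (l4 - l5)) :
    ∀ N ∈ Set.Icc (0 : ℝ) N0, ∀ q : ℝ → ℝ,
      (∀ᶠ ε in nhdsWithin (0 : ℝ) (Set.Ioi 0),
        0 < q ε ∧
          ((l1 * (M + N) - l2 * q ε) * (k + q ε) + ε + ε * k / q ε) / l3 =
            (l4 * q ε / (l5 * (k + q ε))) ^ (1 / ε)) →
      Tendsto q (nhdsWithin (0 : ℝ) (Set.Ioi 0))
          (nhds (l5 * k / (l4 - l5))) ∧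
      Tendsto (fun ε =>
            ((l1 * (M + N) - l2 * q ε) * (k + q ε) + ε + ε * k / q ε) / l3)
          (nhdsWithin (0 : ℝ) (Set.Ioi 0))
          (nhds ((k + l5 * k / (l4 - l5)) *
            (l1 * (M + N) - l2 * (l5 * k / (l4 - l5))) / l3)) := by
  intro N hN q hq
  have h4 : 0 < l4 := h5.trans h45
  have hd : 0 < l4 - l5 := sub_pos.2 h45
  have hrk : l5 * k / (l4 - l5) * (l4 - l5) = l5 * k := div_mul_cancel₀ _ hd.ne'
  have hr : 0 < l5 * k / (l4 - l5) := by positivity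
  set r := l5 * k / (l4 - l5) with hr_def
  have ha : l2 * r < l1 * (M + N) := by
    have e : l2 * (l1 / l2 * (M - N0)) = l1 * (M - N0) := by field_simp
    have h := mul_lt_mul_of_pos_left hcond h2
    have : l1 * (M - N0) ≤ l1 * (M + N) := by
      have := hN.1
      gcongr
      linarith
    linarith
  have hinv : Tendsto (fun ε : ℝ => 1 / ε) (nhdsWithin 0 (Set.Ioi 0)) atTop := by
    simpa only [one_div] using tendsto_inv_nhdsGT_zero (𝕜 := ℝ)
  have hpos : ∀ᶠ ε in nhdsWithin (0 : ℝ) (Set.Ioi 0), 0 < ε := self_mem_nhdsWithin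
  have hid : Tendsto (fun ε : ℝ => ε) (nhdsWithin (0 : ℝ) (Set.Ioi 0)) (nhds 0) :=
    tendsto_id.mono_left nhdsWithin_le_nhds
  have hle : ∀ᶠ ε in nhdsWithin (0 : ℝ) (Set.Ioi 0), ε ≤ 1 :=
    hid.eventually (eventually_le_nhds one_pos)
  have hlim : Tendsto q (nhdsWithin (0 : ℝ) (Set.Ioi 0)) (nhds r) := by
    rw [tendsto_order]
    constructor
    · intro c hc
      rcases le_or_gt c 0 with hc0 | hc0
      · filter_upwards [hq] with ε h
        exact hc0.trans_lt h.1
      have hb : l4 * c / (l5 * (k + c)) < 1 := by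
        rw [div_lt_one (by positivity)]
        nlinarith
      have hb0 : 0 < l4 * c / (l5 * (k + c)) := by positivity
      have hK : 0 < (l1 * (M + N) - l2 * r) * k / l3 := by
        have := sub_pos.2 ha
        positivity
      have ht := (tendsto_rpow_atTop_of_base_lt_one _ (by linarith) hb).comp hinv
      filter_upwards [hq, hpos, ht.eventually (gt_mem_nhds hK)] with ε h hε hlt
      by_contra! hqc
      have hlow := f_lower h2 h3 hk h.1 (hqc.trans hc.le) ha hε
      have hx := h.1
      have hup := Real.rpow_le_rpow (z := 1 / ε) (by positivity)
        (base_mono h4 h5 hk hx hqc) (by positivity)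
      rw [h.2] at hlow
      simp only [Function.comp_apply] at hlt
      linarith
    · intro c hc
      have hc0 : 0 < c := hr.trans hc
      have hb : 1 < l4 * c / (l5 * (k + c)) := by
        rw [one_lt_div (by positivity)]
        nlinarith
      have ht := (tendsto_rpow_atTop_of_base_gt_one _ hb).comp hinv
      filter_upwards [hq, hpos, hle, ht.eventually (eventually_gt_atTop
        ((l1 * (M + N) * k + (l1 * (M + N) - l2 * k) ^ 2 / (4 * l2) + 1 + k / c) / l3))]
        with ε h hε hε1 hlt
      by_contra! hqc
      have hup := f_upper (a := l1 * (M + N)) h2 h3 hk hc0 hqc hε1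
      have hlow := Real.rpow_le_rpow (z := 1 / ε) (by positivity)
        (base_mono h4 h5 hk hc0 hqc) (by positivity)
      rw [h.2] at hup
      simp only [Function.comp_apply] at hlt
      linarith
  refine ⟨hlim, ?_⟩
  have := ((((tendsto_const_nhds (x := l1 * (M + N))).sub (hlim.const_mul l2)).mul
    (hlim.const_add k)).add hid).add ((hid.mul_const k).div hlim hr.ne') |>.div_const l3
  have e : (k + r) * (l1 * (M + N) - l2 * r) / l3 =
      ((l1 * (M + N) - l2 * r) * (k + r) + 0 + 0 * k / r) / l3 := by
    rw [zero_mul, zero_div]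
    ring
  rw [e]
  exact this
end

section
/- Let λ4, λ5 > 0, k > 0, ε > 0, let τ ≤ 0, let x1 : [τ, 0] → ℝ be continuous with x1(t) > 0 for all t, and let x2 : [τ, 0] → ℝ be differentiable with x2(t) ≥ 1 for all t ∈ [τ, 0] and x2′(t) = λ4·x2(t)·x1(t)/(k + x1(t)) − λ5·x2(t)·x2(t)^ε for all t ∈ [τ, 0]. Let y : [τ, 0] → ℝ be the solution of the linear Cauchy problem y′(t) = (λ4·x1(t)/(k + x1(t)) − λ5)·y(t), y(τ) = x2(τ). Then x2(t) ≤ y(t) for all t ∈ [τ, 0]. -/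
open Real

/-!
The quotient `u = y / x2` satisfies `u' = l5 * (x2 ^ ε - 1) * u` and `u τ = 1`, and its growth rate
is nonnegative because `x2 ≥ 1`. The sign of `u` is not known in advance, so monotonicity is obtained
for the square instead: `(u ^ 2)' = 2 * l5 * (x2 ^ ε - 1) * u ^ 2 ≥ 0`, hence `u ^ 2 ≥ 1`. By the
intermediate value theorem `u` never becomes negative, and therefore `u ≥ 1`. No explicit solution
formula, and so no integral of the coefficient, is needed.
-/

/-- Comparison of the perturbed predator component with the solution of the
associated linear Cauchy problem: since `x2 ≥ 1` forces the extra term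
`λ5·x2·(x2^ε − 1)` to be nonnegative, the solution `x2` of the perturbed
equation stays below the solution `y` of the linear problem with the same
initial value at `τ`. -/
theorem comparison_with_linear_solution
    (l4 l5 k ε τ : ℝ) (x1 x2 y : ℝ → ℝ)
    (h4 : 0 < l4) (h5 : 0 < l5) (hk : 0 < k) (hε : 0 < ε) (hτ : τ ≤ 0)
    (hx1cont : ContinuousOn x1 (Set.Icc τ 0))
    (hx1pos : ∀ t ∈ Set.Icc τ 0, 0 < x1 t)
    (hx2one : ∀ t ∈ Set.Icc τ 0, 1 ≤ x2 t)
    (hx2deriv : ∀ t ∈ Set.Icc τ 0,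
      HasDerivAt x2 (l4 * x2 t * x1 t / (k + x1 t) - l5 * x2 t * x2 t ^ ε) t)
    (hyderiv : ∀ t ∈ Set.Icc τ 0,
      HasDerivAt y ((l4 * x1 t / (k + x1 t) - l5) * y t) t)
    (hy0 : y τ = x2 τ) :
    ∀ t ∈ Set.Icc τ 0, x2 t ≤ y t := by
  intro t ht
  have hpos : ∀ s ∈ Set.Icc τ 0, 0 < x2 s := fun s hs => by linarith [hx2one s hs]
  have hquot : ∀ s ∈ Set.Icc τ 0, HasDerivAt (fun r => y r / x2 r)
      (l5 * (x2 s ^ ε - 1) * (y s / x2 s)) s := by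
    intro s hs
    refine ((hyderiv s hs).fun_div (hx2deriv s hs) (hpos s hs).ne').congr_deriv ?_
    have h1 := (hpos s hs).ne'
    have h2 : k + x1 s ≠ 0 := by linarith [hx1pos s hs]
    generalize x2 s ^ ε = p
    field_simp
    ring
  have hcont : ContinuousOn (fun r => y r / x2 r) (Set.Icc τ 0) :=
    fun s hs => (hquot s hs).continuousAt.continuousWithinAt
  have hmono : MonotoneOn (fun r => (y r / x2 r) ^ 2) (Set.Icc τ 0) := by
    refine monotoneOn_of_hasDerivWithinAt_nonneg (convex_Icc τ 0) (hcont.pow 2)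
      (fun s hs => ((hquot s (interior_subset hs)).fun_pow 2).hasDerivWithinAt) ?_
    intro s hs
    have h1 : 0 ≤ l5 * (x2 s ^ ε - 1) :=
      mul_nonneg h5.le (sub_nonneg.2 (one_le_rpow (hx2one s (interior_subset hs)) hε.le))
    have h2 := mul_nonneg h1 (sq_nonneg (y s / x2 s))
    norm_num
    nlinarith
  have hτmem : τ ∈ Set.Icc τ 0 := ⟨le_rfl, hτ⟩
  have hinit : y τ / x2 τ = 1 := by rw [hy0, div_self (hpos τ hτmem).ne']
  have hsq : ∀ s ∈ Set.Icc τ 0, 1 ≤ (y s / x2 s) ^ 2 := by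
    intro s hs
    simpa [hinit] using hmono hτmem hs hs.1
  -- The quotient starts at `1` and, its square being at least `1`, cannot cross `0`.
  have hnonneg : 0 ≤ y t / x2 t := by
    by_contra! hneg
    obtain ⟨s, hs, hs0⟩ := intermediate_value_Icc' ht.1
      (hcont.mono (Set.Icc_subset_Icc_right ht.2))
      (show (0 : ℝ) ∈ Set.Icc (y t / x2 t) (y τ / x2 τ) from ⟨hneg.le, by rw [hinit]; norm_num⟩)
    have h := hsq s ⟨hs.1, hs.2.trans ht.2⟩
    simp only at hs0
    rw [hs0] at h
    norm_num at h
  have hone : 1 ≤ y t / x2 t := by nlinarith [hsq t ht]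
  exact (one_le_div (hpos t ht)).1 hone
end

section
/- Let λ4, λ5 > 0, k > 0, ε > 0, p > 0 and Qbound > 0. Let x = (x1, x2) : ℝ → ℝ² be differentiable and 12-periodic with 0 < x1(t) ≤ p and x2(t) > 0 for all t, satisfying x2′(t) = λ4·x2(t)·x1(t)/(k + x1(t)) − λ5·x2(t)·x2(t)^ε for all t. If there exists τ ∈ [−12, 0] with x2(τ) ≤ max{1, Qbound}, then x2(0) ≤ max{1, Qbound}·exp(12·λ4·p/(k + p) + 12·λ5). -/
open Real

/-!
Since `x1 / (k + x1)` is increasing in `x1` and `0 < x1 ≤ p`, and the term `λ5·x2·x2^ε` is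
nonnegative, the equation gives the differential inequality `x2' ≤ c·x2` with `c = λ4·p/(k+p)`.
Hence `t ↦ x2 t · exp (-c t)` is nonincreasing, so `x2 0 ≤ x2 τ · exp (-c τ) ≤ x2 τ · exp (12 c)`
for every `τ ∈ [-12, 0]`. The bound thus holds even without the summand `12·λ5`
in the exponent.
-/

/-- A priori bound for the second component of a 12-periodic solution of the
perturbed system: if `x2` comes below `max {1, Qbound}` at some `τ ∈ [−12, 0]`,
then `x2(0)` is bounded by `max {1, Qbound} · exp(12·λ4·p/(k+p) + 12·λ5)`. -/
theorem x2_apriori_bound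
    (l4 l5 k ε p Qbound : ℝ) (x1 x2 : ℝ → ℝ)
    (h4 : 0 < l4) (h5 : 0 < l5) (hk : 0 < k) (hε : 0 < ε)
    (hp : 0 < p) (hQ : 0 < Qbound)
    (hx1diff : Differentiable ℝ x1) (hx2diff : Differentiable ℝ x2)
    (hx1per : ∀ t : ℝ, x1 (t + 12) = x1 t)
    (hx2per : ∀ t : ℝ, x2 (t + 12) = x2 t)
    (hx1pos : ∀ t : ℝ, 0 < x1 t) (hx1le : ∀ t : ℝ, x1 t ≤ p)
    (hx2pos : ∀ t : ℝ, 0 < x2 t)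
    (hode : ∀ t : ℝ, deriv x2 t =
      l4 * x2 t * x1 t / (k + x1 t) - l5 * x2 t * x2 t ^ ε)
    (hτ : ∃ τ ∈ Set.Icc (-12 : ℝ) 0, x2 τ ≤ max 1 Qbound) :
    x2 0 ≤ max 1 Qbound * Real.exp (12 * l4 * p / (k + p) + 12 * l5) := by
  obtain ⟨τ, ⟨hτ1, hτ2⟩, hτM⟩ := hτ
  set c := l4 * p / (k + p) with hc
  have hc0 : 0 < c := by positivity
  have hgrowth : ∀ t, deriv x2 t ≤ c * x2 t := by
    intro t
    have h1 := hx1pos t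
    have h2 := hx2pos t
    have hfrac : x1 t / (k + x1 t) ≤ p / (k + p) := by
      rw [div_le_div_iff₀ (by positivity) (by positivity)]
      nlinarith [mul_le_mul_of_nonneg_left (hx1le t) hk.le]
    have hloss : 0 ≤ l5 * x2 t * x2 t ^ ε := by positivity
    calc deriv x2 t ≤ (l4 * x2 t) * (x1 t / (k + x1 t)) := by
          rw [hode t, ← mul_div_assoc]
          linarith
      _ ≤ (l4 * x2 t) * (p / (k + p)) := by gcongr
      _ = c * x2 t := by rw [hc]; ring
  have hderiv : ∀ t, HasDerivAt (fun t => x2 t * Real.exp (-c * t))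
      ((deriv x2 t - c * x2 t) * Real.exp (-c * t)) t := by
    intro t
    have he : HasDerivAt (fun t => Real.exp (-c * t)) (Real.exp (-c * t) * (-c * 1)) t :=
      ((hasDerivAt_id t).const_mul (-c)).exp
    refine ((hx2diff t).hasDerivAt.mul he).congr_deriv ?_
    ring
  have hanti : Antitone (fun t => x2 t * Real.exp (-c * t)) :=
    antitone_of_hasDerivAt_nonpos hderiv fun t =>
      mul_nonpos_of_nonpos_of_nonneg (sub_nonpos.2 (hgrowth t)) (Real.exp_pos _).le
  have h0 : x2 0 ≤ x2 τ * Real.exp (-c * τ) := by simpa using hanti hτ2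
  refine h0.trans (mul_le_mul hτM (Real.exp_le_exp.2 ?_) (Real.exp_pos _).le (by positivity))
  have h12 : 12 * l4 * p / (k + p) = 12 * c := by rw [hc]; ring
  rw [h12]
  nlinarith
end

section
/- Let λ1, λ2, λ3, λ4, λ5 > 0, k > 0, M > 0, N > 0 and ε > 0. Then the perturbed system has no constant solutions in the closed first quadrant: there is no pair (a, b) ∈ [0, ∞) × [0, ∞) such that P_{ε,N}(t, a, b) = 0 for all t ∈ [0, 12] and Q_ε(a, b) = 0, where P_{ε,N}(t, x1, x2) = λ1·(M + N·sin(π t/6 + 1))·x1 − λ2·x1² − λ3·x2·x1/(k + x1) + ε and Q_ε(x1, x2) = λ4·x2·x1/(k + x1) − λ5·x2·x2^ε. -/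
/-!
Comparing the first equation at two times half a period apart cancels everything except the
seasonal term `l1 * N * sin (π t / 6 + 1) * a`, which forces `a = 0`. The first equation then
reduces to `ε = 0`, contradicting `0 < ε`.
-/

open Real

/-- The perturbed lagoon system has no constant solutions in the closed first
quadrant. -/
theorem no_constant_solutions
    (l1 l2 l3 l4 l5 k M N ε : ℝ)
    (h1 : 0 < l1) (h2 : 0 < l2) (h3 : 0 < l3) (h4 : 0 < l4) (h5 : 0 < l5)
    (hk : 0 < k) (hM : 0 < M) (hN : 0 < N) (hε : 0 < ε) :
    ¬ ∃ a b : ℝ, 0 ≤ a ∧ 0 ≤ b ∧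
      (∀ t ∈ Set.Icc (0 : ℝ) 12,
        l1 * (M + N * Real.sin (π * t / 6 + 1)) * a - l2 * a ^ 2
          - l3 * b * (a / (k + a)) + ε = 0) ∧
      l4 * b * (a / (k + a)) - l5 * b * b ^ ε = 0 := by
  rintro ⟨a, b, -, -, hP, -⟩
  -- The times `0` and `6` are half a period apart, so the sine changes sign between them.
  have e0 := hP 0 ⟨le_rfl, by norm_num⟩
  have e6 := hP 6 ⟨by norm_num, by norm_num⟩
  rw [show π * 0 / 6 + 1 = 1 by ring] at e0
  rw [show π * 6 / 6 + 1 = 1 + π by ring, Real.sin_add_pi] at e6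
  have hs : 0 < Real.sin 1 := Real.sin_pos_of_pos_of_lt_pi one_pos (by linarith [Real.pi_gt_three])
  have hprod : (l1 * N * Real.sin 1) * a = 0 := by linarith
  have ha : a = 0 := (mul_eq_zero.mp hprod).resolve_left (by positivity)
  subst ha
  simp at e0
  exact hε.ne' e0
end

section
/- Let λ1, λ2, λ3 > 0, k > 0, M > 0 and 0 ≤ N < M. For each ε > 0 there exists a unique u_{ε,N,1} > 0 such that f_{ε,N,1}(u_{ε,N,1}) = 0, where f_{ε,N,1}(x1) = ((λ1(M − N) − λ2·x1)(k + x1) + ε + ε·k/x1)/λ3; moreover u_{ε,N,1} → u_{N,1} = (λ1/λ2)(M − N) as ε → 0⁺. -/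
open Real Filter

/-!
Since `ε + ε * k / x = (k + x) * (ε / x)`, the function factors for `x > 0` as
`(k + x) * (l1 * (M - N) - l2 * x + ε / x) / l3`, so its positive zeros are those of the quadratic
`l2 * x ^ 2 - l1 * (M - N) * x - ε`. The roots of this quadratic have product `-ε / l2 < 0`, so
exactly one is positive, and the quadratic formula (`root_iff`) exhibits it as a continuous
function of `ε` whose value at `ε = 0` is `l1 / l2 * (M - N)`.
-/

/-- The positive zero is given by the quadratic formula; here `a` stands for `l1 * (M - N)`. -/
lemma root_iff {a b c k ε x : ℝ} (ha : 0 < a) (hb : 0 < b) (hc : 0 < c) (hk : 0 < k)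
    (hε : 0 < ε) :
    (0 < x ∧ ((a - b * x) * (k + x) + ε + ε * k / x) / c = 0) ↔
      x = (a + √(a ^ 2 + 4 * b * ε)) / (2 * b) := by
  have hs : √(a ^ 2 + 4 * b * ε) ^ 2 = a ^ 2 + 4 * b * ε := Real.sq_sqrt (by positivity)
  have hs0 : 0 ≤ √(a ^ 2 + 4 * b * ε) := Real.sqrt_nonneg _
  have hfac : 0 < x → ((a - b * x) * (k + x) + ε + ε * k / x) / c
      = (k + x) * (a * x - b * x ^ 2 + ε) / (x * c) := by
    intro hx
    field_simp
    ring
  constructor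
  · rintro ⟨hx, h⟩
    rw [hfac hx, div_eq_zero_iff, mul_eq_zero] at h
    have hq : a * x - b * x ^ 2 + ε = 0 :=
      (h.resolve_right (by positivity)).resolve_left (by positivity)
    -- A positive zero lies to the right of the vertex `a / (2 * b)`, as `x * (b * x - a) = ε > 0`.
    have hpos : 0 < b * x - a := by
      by_contra! hneg
      nlinarith
    have hroot : √(a ^ 2 + 4 * b * ε) = 2 * b * x - a := by
      rw [Real.sqrt_eq_iff_mul_self_eq (by positivity) (by nlinarith)]
      linear_combination (4 * b) * hq
    rw [hroot]
    field_simp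
    ring
  · intro h
    have hx : 0 < x := by rw [h]; positivity
    have hroot : √(a ^ 2 + 4 * b * ε) = 2 * b * x - a := by
      rw [h]
      field_simp
      ring
    rw [hroot] at hs
    have hq : a * x - b * x ^ 2 + ε = 0 := by
      have : 4 * b * (a * x - b * x ^ 2 + ε) = 0 := by linear_combination -hs
      exact (mul_eq_zero.mp this).resolve_left (by positivity)
    refine ⟨hx, ?_⟩
    rw [hfac hx, hq, mul_zero, zero_div]

/-- Existence and uniqueness of the positive root `u_{ε,N,1}` of `f_{ε,N,1}`,
and its convergence to `u_{N,1} = (λ1/λ2)(M − N)` as `ε → 0⁺`. -/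
theorem f1_unique_root_and_convergence
    (l1 l2 l3 k M N : ℝ)
    (h1 : 0 < l1) (h2 : 0 < l2) (h3 : 0 < l3) (hk : 0 < k)
    (hM : 0 < M) (hN : 0 ≤ N) (hNM : N < M) :
    (∀ ε : ℝ, 0 < ε → ∃! u : ℝ, 0 < u ∧
      ((l1 * (M - N) - l2 * u) * (k + u) + ε + ε * k / u) / l3 = 0) ∧
    (∀ u : ℝ → ℝ,
      (∀ ε : ℝ, 0 < ε → 0 < u ε ∧
        ((l1 * (M - N) - l2 * u ε) * (k + u ε) + ε + ε * k / u ε) / l3 = 0) →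
      Tendsto u (nhdsWithin (0 : ℝ) (Set.Ioi 0))
        (nhds (l1 / l2 * (M - N)))) := by
  have ha : 0 < l1 * (M - N) := mul_pos h1 (sub_pos.mpr hNM)
  refine ⟨fun ε hε => ⟨_, (root_iff ha h2 h3 hk hε).mpr rfl,
    fun y hy => (root_iff ha h2 h3 hk hε).mp hy⟩, fun u hu => ?_⟩
  have hcont : Continuous fun ε : ℝ =>
      (l1 * (M - N) + √((l1 * (M - N)) ^ 2 + 4 * l2 * ε)) / (2 * l2) := by
    fun_prop
  have hlim := (hcont.tendsto 0).mono_left (nhdsWithin_le_nhds (s := Set.Ioi 0))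
  have hval : (l1 * (M - N) + √((l1 * (M - N)) ^ 2 + 4 * l2 * 0)) / (2 * l2)
      = l1 / l2 * (M - N) := by
    rw [mul_zero, add_zero, Real.sqrt_sq ha.le]
    field_simp
    ring
  rw [hval] at hlim
  refine hlim.congr' ?_
  filter_upwards [self_mem_nhdsWithin] with ε hε
  exact ((root_iff ha h2 h3 hk hε).mp (hu ε hε)).symm
end
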